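/- arXiv:1607.08716 — 2 statements merged into one kernel-verified Lean document; each statement's English description precedes it below -/
import Mathlib

section
/- For α > 0 and y > 0 let g_α(y) = θ₃(αy)·θ₃(α/y) + θ₂(αy)·θ₂(α/y). Then: (1) g_α is strictly decreasing on (1, √3) and strictly increasing on (√3, +∞); (2) the second derivative of g_α at y = 1 is negative, g_α''(1) < 0. In particular y = √3 is the unique minimizer of g_α on [1, +∞). -/
/-!
`g_α` is the theta function of a lattice that is square at `y = 1` and hexagonal at `y = √3`.
Poisson summation exchanges `α` and `4 / α`, so one may assume `α ≥ 2`. Let `S` be the derivative of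
`g_α` without its positive factor `πα / y²`.

Beyond `√3`, `S` increases: it is a lattice sum, and on `[√3, ∞)` each term grows at least as fast
as a constant multiple of `e^{-πα/y}`, where the constants have a positive sum.

Up to `√3`, following Montgomery, summing over one lattice coordinate turns `-S / (y² + 1)` into
`∑ₙ n e^{-Yn²} K(nt)` with an odd theta kernel `K` and `t = (y² - 1) / (y² + 1)`. The term `n = 1`
is bounded below, and the others above, by multiples of `sin(2πt)`; the first one wins, so
`S ≤ -c sin(2πt)`. This makes `S` negative on `(1, √3)`, and because `S` vanishes at `1` it also
bounds the second derivative there. At the hexagonal lattice `t = 1/2`, where `K(n/2) = 0` for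
all `n`, so `S(√3) = 0`.
-/

open scoped BigOperators

/-- The classical Jacobi theta function `θ₂(x) = Σ_{k∈ℤ} e^{−π(k+1/2)²x}`. -/
noncomputable def theta2 (x : ℝ) : ℝ :=
  ∑' n : ℤ, Real.exp (-Real.pi * ((n : ℝ) + 1 / 2) ^ 2 * x)

/-- The classical Jacobi theta function `θ₃(x) = Σ_{k∈ℤ} e^{−πk²x}`. -/
noncomputable def theta3 (x : ℝ) : ℝ :=
  ∑' n : ℤ, Real.exp (-Real.pi * (n : ℝ) ^ 2 * x)

open Real Set Filter Topology

/-! ### Theta series and their derivatives -/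

/-- The theta series shifted by `δ`, with the terms weighted by `((n + δ)²)ʲ`. The shift `0` gives
`θ₃`, the shift `1/2` gives `θ₂`, and `j` counts derivatives in `x`, up to powers of `-π`. -/
noncomputable def thetaMoment (δ : ℝ) (j : ℕ) (x : ℝ) : ℝ :=
  ∑' n : ℤ, (((n : ℝ) + δ) ^ 2) ^ j * exp (-π * ((n : ℝ) + δ) ^ 2 * x)

lemma theta3_eq_thetaMoment (x : ℝ) : theta3 x = thetaMoment 0 0 x := by
  simp [theta3, thetaMoment]

lemma theta2_eq_thetaMoment (x : ℝ) : theta2 x = thetaMoment (1 / 2) 0 x := by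
  simp [theta2, thetaMoment]

lemma summable_thetaMoment (δ : ℝ) (j : ℕ) {x : ℝ} (hx : 0 < x) :
    Summable fun n : ℤ => (((n : ℝ) + δ) ^ 2) ^ j * exp (-π * ((n : ℝ) + δ) ^ 2 * x) := by
  refine (HurwitzKernelBounds.summable_f_int (2 * j) δ hx).congr fun n => ?_
  rw [HurwitzKernelBounds.f_int, pow_mul, sq_abs]

lemma hasSum_thetaMoment (δ : ℝ) (j : ℕ) {x : ℝ} (hx : 0 < x) :
    HasSum (fun n : ℤ => (((n : ℝ) + δ) ^ 2) ^ j * exp (-π * ((n : ℝ) + δ) ^ 2 * x))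
      (thetaMoment δ j x) :=
  (summable_thetaMoment δ j hx).hasSum

lemma hasDerivAt_thetaMoment (δ : ℝ) (j : ℕ) {x : ℝ} (hx : 0 < x) :
    HasDerivAt (thetaMoment δ j) (-π * thetaMoment δ (j + 1) x) x := by
  have hx_half : 0 < x / 2 := half_pos hx
  have hmem : x ∈ Ioi (x / 2) := half_lt_self hx
  have hterm : ∀ (n : ℤ) (y : ℝ), y ∈ Ioi (x / 2) → HasDerivAt
      (fun y => (((n : ℝ) + δ) ^ 2) ^ j * exp (-π * ((n : ℝ) + δ) ^ 2 * y))
      (-π * ((((n : ℝ) + δ) ^ 2) ^ (j + 1) * exp (-π * ((n : ℝ) + δ) ^ 2 * y))) y := by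
    intro n y _
    refine (((hasDerivAt_id y).const_mul (-π * ((n : ℝ) + δ) ^ 2)).exp.const_mul _).congr_deriv ?_
    simp only [id_eq]
    ring
  have hbound : ∀ (n : ℤ) (y : ℝ), y ∈ Ioi (x / 2) →
      ‖-π * ((((n : ℝ) + δ) ^ 2) ^ (j + 1) * exp (-π * ((n : ℝ) + δ) ^ 2 * y))‖ ≤
        π * ((((n : ℝ) + δ) ^ 2) ^ (j + 1) * exp (-π * ((n : ℝ) + δ) ^ 2 * (x / 2))) := by
    intro n y hy
    rw [norm_mul, norm_neg, norm_of_nonneg pi_pos.le, norm_of_nonneg (by positivity)]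
    have hexponent : -π * ((n : ℝ) + δ) ^ 2 * y ≤ -π * ((n : ℝ) + δ) ^ 2 * (x / 2) :=
      mul_le_mul_of_nonpos_left (le_of_lt hy) (by nlinarith [pi_pos, sq_nonneg ((n : ℝ) + δ)])
    gcongr
  have hderiv := hasDerivAt_tsum_of_isPreconnected
    ((summable_thetaMoment δ (j + 1) hx_half).mul_left π) isOpen_Ioi isPreconnected_Ioi hterm
    hbound hmem (summable_thetaMoment δ j hx) hmem
  rwa [tsum_mul_left] at hderiv

/-! ### Self-duality -/

lemma hasSum_of_isCompl_range {ι κ : Type*} {e₁ e₂ : κ → ι} (h₁ : Function.Injective e₁)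
    (h₂ : Function.Injective e₂) (hcompl : IsCompl (range e₁) (range e₂)) {f : ι → ℝ} {A B : ℝ}
    (hA : HasSum (f ∘ e₁) A) (hB : HasSum (f ∘ e₂) B) : HasSum f (A + B) :=
  (h₁.hasSum_range_iff.2 hA).add_isCompl hcompl (h₂.hasSum_range_iff.2 hB)

lemma isCompl_range_even_odd :
    IsCompl (range fun n : ℤ => 2 * n) (range fun n : ℤ => 2 * n + 1) := by
  refine ⟨disjoint_left.2 ?_, codisjoint_iff_le_sup.2 fun n _ => ?_⟩
  · rintro _ ⟨a, rfl⟩ ⟨b, hb⟩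
    simp only at hb
    omega
  · obtain ⟨c, hc | hc⟩ := Int.even_or_odd' n
    exacts [Or.inl ⟨c, hc.symm⟩, Or.inr ⟨c, hc.symm⟩]

lemma theta3_eq_theta3_add_theta2 {x : ℝ} (hx : 0 < x) :
    theta3 x = theta3 (4 * x) + theta2 (4 * x) := by
  have hx4 : 0 < 4 * x := by positivity
  simp only [theta3_eq_thetaMoment, theta2_eq_thetaMoment]
  refine (hasSum_thetaMoment 0 0 hx).unique (hasSum_of_isCompl_range
    (e₁ := fun n : ℤ => 2 * n) (e₂ := fun n : ℤ => 2 * n + 1)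
    (fun a b h => by simp only at h; omega) (fun a b h => by simp only at h; omega)
    isCompl_range_even_odd ?_ ?_)
  · convert! hasSum_thetaMoment 0 0 hx4 using 2 with n
    simp only [Function.comp_apply]
    push_cast
    ring_nf
  · convert! hasSum_thetaMoment (1 / 2) 0 hx4 using 2 with n
    simp only [Function.comp_apply]
    push_cast
    ring_nf

lemma theta3_inv {x : ℝ} (hx : 0 < x) : theta3 x = 1 / √x * theta3 (1 / x) := by
  have hpoisson := Real.tsum_exp_neg_mul_int_sq hx
  rw [← sqrt_eq_rpow] at hpoisson
  rw [theta3, theta3]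
  convert! hpoisson using 4 <;> ring_nf

lemma theta3_dual {x : ℝ} (hx : 0 < x) :
    theta3 x = 1 / √x * (theta3 (4 / x) + theta2 (4 / x)) := by
  rw [theta3_inv hx, theta3_eq_theta3_add_theta2 (one_div_pos.2 hx), mul_one_div]

lemma theta2_dual {x : ℝ} (hx : 0 < x) :
    theta2 x = 1 / √x * (theta3 (4 / x) - theta2 (4 / x)) := by
  have hx4 : 0 < x / 4 := by positivity
  have hsplit := theta3_eq_theta3_add_theta2 hx4
  have hinv := theta3_inv hx4
  have hsqrt : √(x / 4) = √x / 2 := by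
    rw [sqrt_div hx.le, show (4 : ℝ) = 2 ^ 2 by norm_num, sqrt_sq zero_le_two]
  rw [mul_div_cancel₀ _ four_ne_zero] at hsplit
  rw [hsqrt, one_div_div, one_div_div] at hinv
  rw [← sub_eq_iff_eq_add'.2 hsplit, hinv, theta3_dual hx]
  ring

/-- The function `g_α`: the theta function, with parameter `α`, of the lattice
`{(m√y, n/√y) : (m, n) ∈ ℤ² ∪ (ℤ + 1/2)²}`, which is square for `y = 1` and hexagonal for
`y = √3`. -/
noncomputable def energy (α y : ℝ) : ℝ :=
  theta3 (α * y) * theta3 (α / y) + theta2 (α * y) * theta2 (α / y)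

lemma energy_dual {α y : ℝ} (hα : 0 < α) (hy : 0 < y) :
    energy α y = 2 / α * energy (4 / α) y := by
  have hmul : 0 < α * y := by positivity
  have hdiv : 0 < α / y := by positivity
  have hsqrt : 1 / √(α * y) * (1 / √(α / y)) = 1 / α := by
    rw [one_div_mul_one_div, ← sqrt_mul hmul.le, show α * y * (α / y) = α ^ 2 by field_simp,
      sqrt_sq hα.le]
  have hdual_mul : 4 / (α * y) = 4 / α / y := by field_simp
  have hdual_div : 4 / (α / y) = 4 / α * y := by field_simp
  rw [energy, theta3_dual hmul, theta3_dual hdiv, theta2_dual hmul, theta2_dual hdiv, energy,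
    hdual_mul, hdual_div]
  linear_combination (2 * (theta3 (4 / α / y) * theta3 (4 / α * y) +
    theta2 (4 / α / y) * theta2 (4 / α * y))) * hsqrt

/-! ### The energy as a lattice sum -/

/-- The lattice sum of `m²ⁱ n²ʲ e^{-πα(m²y + n²/y)}` over `(m, n) ∈ ℤ² ∪ (ℤ + 1/2)²`. -/
noncomputable def latticeMoment (α : ℝ) (i j : ℕ) (y : ℝ) : ℝ :=
  thetaMoment 0 i (α * y) * thetaMoment 0 j (α / y) +
    thetaMoment (1 / 2) i (α * y) * thetaMoment (1 / 2) j (α / y)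

lemma energy_eq_latticeMoment (α : ℝ) : energy α = latticeMoment α 0 0 := by
  funext y
  simp only [energy, latticeMoment, theta3_eq_thetaMoment, theta2_eq_thetaMoment]

lemma hasDerivAt_thetaMoment_mul_thetaMoment (δ : ℝ) (i j : ℕ) {α y : ℝ} (hα : 0 < α)
    (hy : 0 < y) :
    HasDerivAt (fun y => thetaMoment δ i (α * y) * thetaMoment δ j (α / y))
      (π * α * (thetaMoment δ i (α * y) * thetaMoment δ (j + 1) (α / y) / y ^ 2 -
        thetaMoment δ (i + 1) (α * y) * thetaMoment δ j (α / y))) y := by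
  have hmul := (hasDerivAt_thetaMoment δ i (mul_pos hα hy)).comp y
    ((hasDerivAt_id y).const_mul α)
  have hdiv := (hasDerivAt_thetaMoment δ j (div_pos hα hy)).comp y
    ((hasDerivAt_const y α).div (hasDerivAt_id y) hy.ne')
  refine (hmul.mul hdiv).congr_deriv ?_
  simp only [Function.comp_apply]
  ring

lemma hasDerivAt_latticeMoment (i j : ℕ) {α y : ℝ} (hα : 0 < α) (hy : 0 < y) :
    HasDerivAt (latticeMoment α i j)
      (π * α * (latticeMoment α i (j + 1) y / y ^ 2 - latticeMoment α (i + 1) j y)) y := by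
  refine ((hasDerivAt_thetaMoment_mul_thetaMoment 0 i j hα hy).add
    (hasDerivAt_thetaMoment_mul_thetaMoment (1 / 2) i j hα hy)).congr_deriv ?_
  rw [latticeMoment, latticeMoment]
  ring

/-- The derivative of the energy without its positive factor `πα / y²`. -/
noncomputable def energySlope (α y : ℝ) : ℝ :=
  latticeMoment α 0 1 y - y ^ 2 * latticeMoment α 1 0 y

lemma hasDerivAt_energy {α y : ℝ} (hα : 0 < α) (hy : 0 < y) :
    HasDerivAt (energy α) (π * α / y ^ 2 * energySlope α y) y := by
  rw [energy_eq_latticeMoment]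
  refine (hasDerivAt_latticeMoment 0 0 hα hy).congr_deriv ?_
  rw [energySlope]
  field_simp

lemma differentiableAt_energySlope {α y : ℝ} (hα : 0 < α) (hy : 0 < y) :
    DifferentiableAt ℝ (energySlope α) y :=
  (hasDerivAt_latticeMoment 0 1 hα hy).differentiableAt.sub
    ((differentiableAt_id.pow 2).mul (hasDerivAt_latticeMoment 1 0 hα hy).differentiableAt)

lemma energySlope_one (α : ℝ) : energySlope α 1 = 0 := by
  simp only [energySlope, latticeMoment, mul_one, div_one]
  ring

lemma energySlope_dual {α y : ℝ} (hα : 0 < α) (hy : 0 < y) :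
    energySlope α y = 8 / α ^ 3 * energySlope (4 / α) y := by
  have hα4 : 0 < 4 / α := by positivity
  have hdual : energy α =ᶠ[𝓝 y] fun z => 2 / α * energy (4 / α) z := by
    filter_upwards [lt_mem_nhds hy] with z hz using energy_dual hα hz
  have hunique := ((hasDerivAt_energy hα hy).congr_of_eventuallyEq hdual.symm).unique
    ((hasDerivAt_energy hα4 hy).const_mul (2 / α))
  field_simp at hunique ⊢
  linarith

/-- The point `(m, n)` of `ℤ² ∪ (ℤ + 1/2)²` with `m + n = p.1` and `m - n = p.2`; these points run
through the whole set as `p` runs through `ℤ²`. -/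
noncomputable def latticePoint (p : ℤ × ℤ) : ℝ × ℝ :=
  (((p.1 : ℝ) + p.2) / 2, ((p.1 : ℝ) - p.2) / 2)

lemma isCompl_range_sublattice :
    IsCompl (range fun p : ℤ × ℤ => (p.1 + p.2, p.1 - p.2))
      (range fun p : ℤ × ℤ => (p.1 + p.2 + 1, p.1 - p.2)) := by
  refine ⟨disjoint_left.2 ?_, codisjoint_iff_le_sup.2 ?_⟩
  · rintro _ ⟨⟨a, b⟩, rfl⟩ ⟨⟨c, d⟩, h⟩
    simp only [Prod.mk.injEq] at h
    omega
  · rintro ⟨a, b⟩ _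
    obtain ⟨c, hc | hc⟩ := Int.even_or_odd' (a + b)
    · exact Or.inl ⟨(c, a - c), by simp only [Prod.mk.injEq]; omega⟩
    · exact Or.inr ⟨(c, a - c - 1), by simp only [Prod.mk.injEq]; omega⟩

lemma hasSum_latticePoint {h : ℝ × ℝ → ℝ} {A B : ℝ}
    (hA : HasSum (fun p : ℤ × ℤ => h (p.1 + 0, p.2 + 0)) A)
    (hB : HasSum (fun p : ℤ × ℤ => h (p.1 + 1 / 2, p.2 + 1 / 2)) B) :
    HasSum (fun p => h (latticePoint p)) (A + B) := by
  refine hasSum_of_isCompl_range (fun p q h => ?_) (fun p q h => ?_) isCompl_range_sublattice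
    ?_ ?_
  · simp only [Prod.mk.injEq] at h
    ext <;> omega
  · simp only [Prod.mk.injEq] at h
    ext <;> omega
  · convert! hA using 2 with p
    simp only [Function.comp_apply, latticePoint]
    push_cast
    ring_nf
  · convert! hB using 2 with p
    simp only [Function.comp_apply, latticePoint]
    push_cast
    ring_nf

/-- The quadratic form of the lattice with parameter `y`. -/
noncomputable def rectForm (y : ℝ) (v : ℝ × ℝ) : ℝ :=
  v.1 ^ 2 * y + v.2 ^ 2 / y

lemma hasSum_thetaMoment_mul_thetaMoment (δ : ℝ) (i j : ℕ) {α y : ℝ} (hα : 0 < α) (hy : 0 < y) :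
    HasSum (fun p : ℤ × ℤ => (((p.1 : ℝ) + δ) ^ 2) ^ i * (((p.2 : ℝ) + δ) ^ 2) ^ j *
        exp (-(π * α) * rectForm y (p.1 + δ, p.2 + δ)))
      (thetaMoment δ i (α * y) * thetaMoment δ j (α / y)) := by
  have hmul : 0 < α * y := by positivity
  have hdiv : 0 < α / y := by positivity
  refine ((hasSum_thetaMoment δ i hmul).mul (hasSum_thetaMoment δ j hdiv)
    ((summable_thetaMoment δ i hmul).mul_of_nonneg (summable_thetaMoment δ j hdiv)
      (fun _ => by positivity) (fun _ => by positivity))).congr_fun fun p => ?_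
  have hexp : exp (-(π * α) * rectForm y (p.1 + δ, p.2 + δ)) =
      exp (-π * ((p.1 : ℝ) + δ) ^ 2 * (α * y)) * exp (-π * ((p.2 : ℝ) + δ) ^ 2 * (α / y)) := by
    rw [← exp_add, rectForm]
    ring_nf
  rw [hexp]
  ring

lemma hasSum_latticeMoment (i j : ℕ) {α y : ℝ} (hα : 0 < α) (hy : 0 < y) :
    HasSum (fun p => ((latticePoint p).1 ^ 2) ^ i * ((latticePoint p).2 ^ 2) ^ j *
      exp (-(π * α) * rectForm y (latticePoint p))) (latticeMoment α i j y) :=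
  hasSum_latticePoint
    (h := fun v => (v.1 ^ 2) ^ i * (v.2 ^ 2) ^ j * exp (-(π * α) * rectForm y v))
    (hasSum_thetaMoment_mul_thetaMoment 0 i j hα hy)
    (hasSum_thetaMoment_mul_thetaMoment (1 / 2) i j hα hy)

/-- The contribution of the point `v` to `energySlope α y`, where `β = πα`. -/
noncomputable def slopeTerm (β y : ℝ) (v : ℝ × ℝ) : ℝ :=
  (v.2 ^ 2 - v.1 ^ 2 * y ^ 2) * exp (-β * rectForm y v)

lemma hasSum_slopeTerm {α y : ℝ} (hα : 0 < α) (hy : 0 < y) :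
    HasSum (fun p => slopeTerm (π * α) y (latticePoint p)) (energySlope α y) := by
  refine ((hasSum_latticeMoment 0 1 hα hy).sub
    ((hasSum_latticeMoment 1 0 hα hy).mul_left (y ^ 2))).congr_fun fun p => ?_
  rw [slopeTerm]
  ring

/-! ### The slope as a series of odd theta kernels -/

open HurwitzZeta

/-- The coefficient `t` for which the quadratic form `rectForm y`, read in the coordinates
`(a, b) = (m + n, m - n)`, is a multiple of `a² + 2tab + b²`. It vanishes for the square lattice
and equals `1/2` for the hexagonal one. -/
noncomputable def skew (y : ℝ) : ℝ :=
  (y ^ 2 - 1) / (y ^ 2 + 1)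

lemma skew_one : skew 1 = 0 := by
  norm_num [skew]

lemma skew_sqrt_three : skew √3 = 1 / 2 := by
  rw [skew, sq_sqrt zero_le_three]
  norm_num

lemma strictMonoOn_skew : StrictMonoOn skew (Ici 0) := by
  intro y hy z _ hyz
  rw [skew, skew, div_lt_div_iff₀ (by positivity) (by positivity)]
  nlinarith [pow_lt_pow_left₀ hyz hy two_ne_zero]

lemma skew_mem_Icc {y : ℝ} (hy : y ∈ Icc 1 √3) : skew y ∈ Icc 0 (1 / 2) := by
  rw [← skew_one, ← skew_sqrt_three]
  exact (strictMonoOn_skew.monotoneOn.mono (Icc_subset_Ici_self.trans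
    (Ici_subset_Ici.2 zero_le_one))).mapsTo_Icc hy

lemma skew_mem_Ioo {y : ℝ} (hy : y ∈ Ioo 1 √3) : skew y ∈ Ioo 0 (1 / 2) := by
  rw [← skew_one, ← skew_sqrt_three]
  exact (strictMonoOn_skew.mono (Icc_subset_Ici_self.trans
    (Ici_subset_Ici.2 zero_le_one))).mapsTo_Ioo hy

lemma hasDerivAt_skew_one : HasDerivAt skew 1 1 := by
  have hsq : HasDerivAt (fun y : ℝ => y ^ 2) 2 1 := by
    simpa using hasDerivAt_pow 2 (1 : ℝ)
  exact ((hsq.sub_const 1).div (hsq.add_const 1) (by norm_num)).congr_deriv (by norm_num)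

lemma abs_skew_le_one (y : ℝ) : |skew y| ≤ 1 := by
  rw [skew, abs_le, le_div_iff₀ (by positivity), div_le_one (by positivity)]
  constructor <;> nlinarith [sq_nonneg y]

lemma rectForm_latticePoint {y : ℝ} (hy : 0 < y) (p : ℤ × ℤ) :
    rectForm y (latticePoint p) = (y ^ 2 + 1) / (4 * y) * (p.2 + p.1 * skew y) ^ 2 +
      y / (y ^ 2 + 1) * p.1 ^ 2 := by
  have : y ^ 2 + 1 ≠ 0 := by positivity
  simp only [rectForm, latticePoint, skew]
  field_simp
  ring

lemma rectForm_latticePoint_swap (y : ℝ) (p : ℤ × ℤ) :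
    rectForm y (latticePoint p.swap) = rectForm y (latticePoint p) := by
  simp only [rectForm, latticePoint, Prod.fst_swap, Prod.snd_swap]
  ring

/-- Half of `slopeTerm` up to a factor, unsymmetrically in the two coordinates of the index, such
that the sum over the second coordinate is an odd theta kernel. -/
noncomputable def skewTerm (α y : ℝ) (p : ℤ × ℤ) : ℝ :=
  p.1 * (p.2 + p.1 * skew y) * exp (-(π * α) * rectForm y (latticePoint p))

lemma skewTerm_add_skewTerm_swap (α y : ℝ) (p : ℤ × ℤ) :
    skewTerm α y p + skewTerm α y p.swap =
      -4 / (y ^ 2 + 1) * slopeTerm (π * α) y (latticePoint p) := by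
  have : y ^ 2 + 1 ≠ 0 := by positivity
  rw [skewTerm, skewTerm, rectForm_latticePoint_swap, slopeTerm]
  simp only [latticePoint, skew, Prod.fst_swap, Prod.snd_swap]
  field_simp
  ring

lemma summable_skewTerm {α y : ℝ} (hα : 0 < α) (hy : 0 < y) : Summable (skewTerm α y) := by
  refine (((hasSum_latticeMoment 1 0 hα hy).add
    (hasSum_latticeMoment 0 1 hα hy)).mul_left 4).summable.of_norm_bounded fun p => ?_
  have hcoeff : |(p.1 : ℝ) * (p.2 + p.1 * skew y)| ≤
      4 * ((latticePoint p).1 ^ 2 + (latticePoint p).2 ^ 2) := by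
    have hskew := abs_le.1 (abs_skew_le_one y)
    simp only [latticePoint]
    rw [abs_le]
    constructor <;> nlinarith [sq_nonneg ((p.1 : ℝ) + p.2), sq_nonneg ((p.1 : ℝ) - p.2),
      sq_nonneg (p.1 : ℝ), sq_nonneg (p.2 : ℝ)]
  rw [skewTerm, norm_mul, norm_eq_abs, norm_of_nonneg (exp_nonneg _)]
  refine (mul_le_mul_of_nonneg_right hcoeff (exp_nonneg _)).trans_eq ?_
  ring

lemma hasSum_skewTerm {α y : ℝ} (hα : 0 < α) (hy : 0 < y) :
    HasSum (skewTerm α y) (-2 / (y ^ 2 + 1) * energySlope α y) := by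
  obtain ⟨T, hT⟩ := summable_skewTerm hα hy
  have hswap : HasSum (fun p : ℤ × ℤ => skewTerm α y p.swap) T :=
    (Equiv.prodComm ℤ ℤ).hasSum_iff.2 hT
  have hadd := hT.add hswap
  simp only [skewTerm_add_skewTerm_swap] at hadd
  have hunique := hadd.unique ((hasSum_slopeTerm hα hy).mul_left (-4 / (y ^ 2 + 1)))
  convert! hT using 1
  linear_combination -hunique / 2

lemma hasSum_int_oddKernel_skew {α y : ℝ} (hα : 0 < α) (hy : 0 < y) :
    HasSum (fun b : ℤ => b * (exp (-(π * α * y / (y ^ 2 + 1)) * b ^ 2) *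
        oddKernel (b * skew y : ℝ) (α * (y ^ 2 + 1) / (4 * y))))
      (-2 / (y ^ 2 + 1) * energySlope α y) := by
  refine (hasSum_skewTerm hα hy).prod_fiberwise fun b => ?_
  rw [← mul_assoc]
  refine ((hasSum_int_oddKernel (b * skew y) (by positivity)).mul_left _).congr_fun fun a => ?_
  rw [skewTerm, rectForm_latticePoint hy, mul_mul_mul_comm, ← exp_add]
  simp only
  ring_nf

lemma hasSum_nat_oddKernel_skew {α y : ℝ} (hα : 0 < α) (hy : 0 < y) :
    HasSum (fun n : ℕ => n * (exp (-(π * α * y / (y ^ 2 + 1)) * n ^ 2) *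
        oddKernel (n * skew y : ℝ) (α * (y ^ 2 + 1) / (4 * y))))
      (-energySlope α y / (y ^ 2 + 1)) := by
  have hfold := (hasSum_int_oddKernel_skew hα hy).nat_add_neg.div_const 2
  convert! hfold using 1
  · funext n
    push_cast
    rw [neg_mul (n : ℝ) (skew y), AddCircle.coe_neg, oddKernel_neg]
    ring_nf
  · simp only [Int.cast_zero, zero_mul]
    ring

lemma oddKernel_nat_mul_half (n : ℕ) (x : ℝ) : oddKernel (n * (1 / 2) : ℝ) x = 0 := by
  have hcoe : ((n * (1 / 2) : ℝ) : UnitAddCircle) = -((n * (1 / 2) : ℝ) : UnitAddCircle) := by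
    rw [eq_neg_iff_add_eq_zero, ← AddCircle.coe_add, ← mul_add, add_halves, mul_one]
    exact (AddCircle.coe_eq_zero_iff 1).2 ⟨n, by simp⟩
  have hodd := oddKernel_neg ((n * (1 / 2) : ℝ) : UnitAddCircle) x
  rw [← hcoe] at hodd
  linarith

lemma energySlope_sqrt_three {α : ℝ} (hα : 0 < α) : energySlope α √3 = 0 := by
  have hsum := hasSum_nat_oddKernel_skew hα (sqrt_pos.2 zero_lt_three)
  simp only [skew_sqrt_three, oddKernel_nat_mul_half, mul_zero] at hsum
  have hzero := hsum.unique hasSum_zero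
  rw [sq_sqrt zero_le_three] at hzero
  linarith

/-! ### Bounds for the odd theta kernel -/

lemma pow_div_mul_exp_one_le_exp {x : ℝ} (hx : 0 ≤ x) {k : ℕ} (hk : k ≠ 0) :
    (x / k * exp 1) ^ k ≤ exp x := by
  have hlinear : x / k * exp 1 ≤ exp (x / k) := by
    have htangent := add_one_le_exp (x / k - 1)
    rwa [sub_add_cancel, exp_sub, le_div_iff₀ (exp_pos 1)] at htangent
  calc (x / k * exp 1) ^ k ≤ exp (x / k) ^ k := pow_le_pow_left₀ (by positivity) hlinear k
    _ = exp x := by rw [← exp_nat_mul, mul_div_cancel₀ _ (Nat.cast_ne_zero.2 hk)]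

lemma exp_neg_six_le : exp (-6) ≤ 0.005 := by
  have hexp := pow_div_mul_exp_one_le_exp (by norm_num : (0 : ℝ) ≤ 6) (by norm_num : 6 ≠ 0)
  rw [Nat.cast_ofNat, div_self (by norm_num), one_mul] at hexp
  rw [exp_neg, inv_le_comm₀ (exp_pos _) (by norm_num)]
  calc (0.005 : ℝ)⁻¹ ≤ 2.7 ^ 6 := by norm_num
    _ ≤ exp 1 ^ 6 := pow_le_pow_left₀ (by norm_num) (by linarith [exp_one_gt_d9]) 6
    _ ≤ exp 6 := hexp

lemma abs_sin_nat_mul_le (n : ℕ) (θ : ℝ) : |sin (n * θ)| ≤ n * |sin θ| := by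
  induction n with
  | zero => simp
  | succ n ih =>
    have hfirst : |sin (n * θ) * cos θ| ≤ n * |sin θ| := by
      rw [abs_mul]
      exact (mul_le_of_le_one_right (abs_nonneg _) (abs_cos_le_one _)).trans ih
    have hsecond : |cos (n * θ) * sin θ| ≤ |sin θ| := by
      rw [abs_mul]
      exact mul_le_of_le_one_left (abs_nonneg _) (abs_cos_le_one _)
    rw [Nat.cast_succ, add_one_mul, sin_add, add_one_mul]
    exact (abs_add_le _ _).trans (add_le_add hfirst hsecond)

lemma sq_mul_exp_neg_le {k x : ℝ} (hk : k ≠ 0) (hx : 0 < x) :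
    k ^ 2 * exp (-π * k ^ 2 * (1 / x)) ≤ 0.06 * x ^ 2 * (1 / k ^ 2) := by
  have hexp := pow_div_mul_exp_one_le_exp (by positivity : 0 ≤ π * k ^ 2 / x) two_ne_zero
  have hconst : 67 ≤ π ^ 2 * exp 1 ^ 2 := by
    rw [← mul_pow]
    refine le_trans (by norm_num) (pow_le_pow_left₀ (by norm_num : (0:ℝ) ≤ 8.2) ?_ 2)
    nlinarith [pi_gt_three, pi_gt_d2, exp_one_gt_d9]
  have hk_sq : 0 < k ^ 2 := by positivity
  rw [show -π * k ^ 2 * (1 / x) = -(π * k ^ 2 / x) by ring, exp_neg, ← div_eq_mul_inv,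
    div_le_iff₀ (exp_pos _)]
  calc k ^ 2 ≤ 0.06 * x ^ 2 * (1 / k ^ 2) * (67 * (k ^ 2) ^ 2 / (4 * x ^ 2)) := by
        field_simp
        linarith
    _ ≤ 0.06 * x ^ 2 * (1 / k ^ 2) * (π ^ 2 * exp 1 ^ 2 * (k ^ 2) ^ 2 / (4 * x ^ 2)) := by gcongr
    _ = 0.06 * x ^ 2 * (1 / k ^ 2) * (π * k ^ 2 / x / (2 : ℕ) * exp 1) ^ 2 := by
        push_cast
        ring
    _ ≤ 0.06 * x ^ 2 * (1 / k ^ 2) * exp (π * k ^ 2 / x) := by gcongr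

lemma abs_oddKernel_le (a : ℝ) {x : ℝ} (hx : 0 < x) :
    |oddKernel a x| ≤ 0.2 * √x * |sin (2 * π * a)| := by
  have hterm : ∀ k : ℕ, ‖2 * k * sin (2 * π * a * k) * exp (-π * k ^ 2 * (1 / x))‖ ≤
      0.12 * x ^ 2 * |sin (2 * π * a)| * (1 / k ^ 2) := by
    intro k
    rcases eq_or_ne k 0 with rfl | hk
    · simp
    have hsin : |sin (2 * π * a * k)| ≤ k * |sin (2 * π * a)| := by
      rw [mul_comm]
      exact abs_sin_nat_mul_le k _
    rw [norm_mul, norm_mul, norm_of_nonneg (by positivity : (0 : ℝ) ≤ 2 * k), norm_eq_abs,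
      norm_of_nonneg (exp_nonneg _)]
    calc 2 * k * |sin (2 * π * a * k)| * exp (-π * k ^ 2 * (1 / x))
        ≤ 2 * k * (k * |sin (2 * π * a)|) * exp (-π * k ^ 2 * (1 / x)) := by gcongr
      _ = 2 * |sin (2 * π * a)| * (k ^ 2 * exp (-π * k ^ 2 * (1 / x))) := by ring
      _ ≤ 2 * |sin (2 * π * a)| * (0.06 * x ^ 2 * (1 / k ^ 2)) := by
        gcongr 2 * |sin (2 * π * a)| * ?_
        exact sq_mul_exp_neg_le (Nat.cast_ne_zero.2 hk) hx
      _ = 0.12 * x ^ 2 * |sin (2 * π * a)| * (1 / k ^ 2) := by ring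
  have hsinKernel : |sinKernel a (1 / x)| ≤ 0.12 * x ^ 2 * |sin (2 * π * a)| * (π ^ 2 / 6) :=
    (hasSum_nat_sinKernel a (one_div_pos.2 hx)).norm_le_of_bounded
      (hasSum_zeta_two.mul_left _) hterm
  have hpi : π ^ 2 ≤ 10 := by nlinarith [pi_lt_d2, pi_pos]
  have hpow : 1 / x ^ (3 / 2 : ℝ) * x ^ 2 = √x := by
    rw [one_div, ← rpow_neg hx.le, ← rpow_natCast, ← rpow_add hx, sqrt_eq_rpow]
    norm_num
  rw [oddKernel_functional_equation, abs_mul, abs_of_nonneg (by positivity)]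
  calc 1 / x ^ (3 / 2 : ℝ) * |sinKernel a (1 / x)|
      ≤ 1 / x ^ (3 / 2 : ℝ) * (0.12 * x ^ 2 * |sin (2 * π * a)| * (10 / 6)) := by
        gcongr
        exact hsinKernel.trans (by gcongr)
    _ = 0.2 * (1 / x ^ (3 / 2 : ℝ) * x ^ 2) * |sin (2 * π * a)| := by ring
    _ = 0.2 * √x * |sin (2 * π * a)| := by rw [hpow]

lemma convexOn_sinh : ConvexOn ℝ (Ici 0) sinh := by
  refine MonotoneOn.convexOn_of_deriv (convex_Ici 0) continuous_sinh.continuousOn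
    differentiable_sinh.differentiableOn ?_
  rw [Real.deriv_sinh, interior_Ici]
  intro u hu v hv huv
  rwa [cosh_le_cosh, abs_of_pos hu, abs_of_pos hv]

lemma two_mul_sinh_mul_le {c w : ℝ} (hc : 0 ≤ c) (hc_one : c ≤ 1) (hw : 0 ≤ w) :
    2 * sinh (c * w) ≤ c * exp w := by
  have hconvex := convexOn_sinh.2 (mem_Ici.2 hw) self_mem_Ici hc (sub_nonneg.2 hc_one)
    (add_sub_cancel c 1)
  simp only [smul_eq_mul, mul_zero, add_zero, sinh_zero] at hconvex
  have hsinh : 2 * sinh w ≤ exp w := by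
    rw [sinh_eq]
    linarith [exp_pos (-w)]
  nlinarith

-- The terms `n` and `-n` of the kernel differ by a factor `e^{4πntx}`, hence the hyperbolic sine;
-- convexity keeps its error linear in `t`.
lemma neg_le_pair_of_le_quarter {t x : ℝ} (hx : 0 ≤ x) (ht : 0 ≤ t) (ht_quarter : t ≤ 1 / 4)
    {n : ℝ} (hn : 0 ≤ n) :
    -(4 * t * exp (-π * t ^ 2 * x) * (n * exp (-(π * x) * (n ^ 2 - n / 2)))) ≤
      (n + t) * exp (-π * (n + t) ^ 2 * x) + (-n + t) * exp (-π * (-n + t) ^ 2 * x) := by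
  set w := π * x * n / 2 with hw
  have hw_nonneg : 0 ≤ w := by positivity
  have hsinh := two_mul_sinh_mul_le (by linarith : 0 ≤ 4 * t) (by linarith) hw_nonneg
  have hadd : exp (-π * (n + t) ^ 2 * x) =
      exp (-π * t ^ 2 * x) * exp (-(π * x) * n ^ 2) * exp (-(4 * t * w)) := by
    rw [← exp_add, ← exp_add, hw]
    ring_nf
  have hsub : exp (-π * (-n + t) ^ 2 * x) =
      exp (-π * t ^ 2 * x) * exp (-(π * x) * n ^ 2) * exp (4 * t * w) := by
    rw [← exp_add, ← exp_add, hw]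
    ring_nf
  have hmid : exp (-(π * x) * (n ^ 2 - n / 2)) = exp (-(π * x) * n ^ 2) * exp w := by
    rw [← exp_add, hw]
    ring_nf
  rw [hadd, hsub, hmid]
  calc -(4 * t * exp (-π * t ^ 2 * x) * (n * (exp (-(π * x) * n ^ 2) * exp w)))
      = -(exp (-π * t ^ 2 * x) * exp (-(π * x) * n ^ 2) * n * (4 * t * exp w)) := by ring
    _ ≤ -(exp (-π * t ^ 2 * x) * exp (-(π * x) * n ^ 2) * n * (2 * sinh (4 * t * w))) := by
        gcongr
    _ ≤ -(exp (-π * t ^ 2 * x) * exp (-(π * x) * n ^ 2) * n * (2 * sinh (4 * t * w))) +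
        exp (-π * t ^ 2 * x) * exp (-(π * x) * n ^ 2) * t * (2 * cosh (4 * t * w)) :=
        le_add_of_nonneg_right (by positivity [cosh_pos (4 * t * w)])
    _ = _ := by
        rw [sinh_eq, cosh_eq]
        ring

lemma pair_tail_le {x : ℝ} (hx : 1 ≤ x) (k : ℕ) :
    ((k + 1 : ℕ) : ℝ) * exp (-(π * x) * (((k + 1 : ℕ) : ℝ) ^ 2 - ((k + 1 : ℕ) : ℝ) / 2)) ≤
      0.2125 * 0.01 ^ k := by
  have hsq : (k : ℝ) ≤ k ^ 2 := mod_cast Nat.le_self_pow two_ne_zero k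
  have hpi : 3.14 ≤ π * x := by nlinarith [pi_gt_d2]
  have hexponent : -(π * x) * (((k + 1 : ℕ) : ℝ) ^ 2 - ((k + 1 : ℕ) : ℝ) / 2) ≤
      -1.57 + k * -6 := by
    push_cast
    nlinarith
  have hfirst : exp (-1.57) ≤ 0.2125 := by
    have hquad := quadratic_le_exp_of_nonneg (by norm_num : (0 : ℝ) ≤ 0.57)
    rw [exp_neg, inv_le_comm₀ (exp_pos _) (by norm_num), show (1.57 : ℝ) = 1 + 0.57 by norm_num,
      exp_add]
    nlinarith [exp_one_gt_d9]
  have hcount : ((k + 1 : ℕ) : ℝ) ≤ 2 ^ k := mod_cast Nat.lt_two_pow_self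
  calc _ ≤ 2 ^ k * (exp (-1.57) * exp (-6) ^ k) := by
        rw [← exp_nat_mul, ← exp_add]
        gcongr
    _ ≤ 2 ^ k * (0.2125 * 0.005 ^ k) := by
        gcongr
        exact exp_neg_six_le
    _ = 0.2125 * 0.01 ^ k := by
        rw [mul_left_comm, ← mul_pow]
        norm_num

lemma le_oddKernel_of_le_quarter {t x : ℝ} (hx : 1 ≤ x) (ht : 0 ≤ t) (ht_quarter : t ≤ 1 / 4) :
    0.1 * t * exp (-π * t ^ 2 * x) ≤ oddKernel t x := by
  have hfold := (hasSum_nat_add_iff' 1).2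
    (hasSum_int_oddKernel t (zero_lt_one.trans_le hx)).nat_add_neg
  have hgeom := ((hasSum_geometric_of_lt_one (by norm_num : (0 : ℝ) ≤ 0.01)
    (by norm_num)).mul_left 0.2125).mul_left (-(4 * t * exp (-π * t ^ 2 * x)))
  have hle := hasSum_le (fun k => ?_) hgeom hfold
  · simp only [Finset.sum_range_one, Nat.cast_zero, Int.cast_zero, neg_zero, zero_add] at hle
    nlinarith [mul_nonneg ht (exp_nonneg (-π * t ^ 2 * x))]
  · have hpair := neg_le_pair_of_le_quarter (zero_le_one.trans hx) ht ht_quarter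
      (Nat.cast_nonneg (k + 1))
    have htail := mul_le_mul_of_nonneg_left (pair_tail_le hx k)
      (by positivity : 0 ≤ 4 * t * exp (-π * t ^ 2 * x))
    rw [Int.cast_neg, Int.cast_natCast]
    linarith

lemma antitoneOn_mul_exp_neg_sq {x : ℝ} (hx : 1 ≤ x) :
    AntitoneOn (fun v => v * exp (-π * v ^ 2 * x)) (Ici (1 / 2)) := by
  intro u hu v hv huv
  rw [mem_Ici] at hu hv
  have hdiff := add_one_le_exp (π * x * (v ^ 2 - u ^ 2))
  have hgrowth : v ≤ u * exp (π * x * (v ^ 2 - u ^ 2)) := by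
    have hpi : 3 ≤ π * x := by nlinarith [pi_gt_three]
    have hsq : 3 * (v - u) ≤ π * x * (v ^ 2 - u ^ 2) := by
      nlinarith [mul_nonneg (sub_nonneg.2 huv) (by linarith : 0 ≤ u + v - 1)]
    nlinarith
  calc v * exp (-π * v ^ 2 * x)
      ≤ u * exp (π * x * (v ^ 2 - u ^ 2)) * exp (-π * v ^ 2 * x) := by gcongr
    _ = u * exp (-π * u ^ 2 * x) := by
        rw [mul_assoc, ← exp_add]
        ring_nf

lemma le_central_pair_of_quarter_le {t x : ℝ} (hx : 1 ≤ x) (ht_quarter : 1 / 4 ≤ t)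
    (ht_half : t ≤ 1 / 2) :
    0.1 * (1 / 2 - t) * exp (-π * t ^ 2 * x) ≤
      t * exp (-π * t ^ 2 * x) + (-1 + t) * exp (-π * (-1 + t) ^ 2 * x) := by
  obtain ⟨d, rfl⟩ : ∃ d, t = 1 / 2 - d := ⟨1 / 2 - t, by ring⟩
  have hd : 0 ≤ d := by linarith
  have hratio : exp (-(2 * π * x * d)) ≤ 1 / (1 + 6 * d + 18 * d ^ 2) := by
    rw [exp_neg, ← one_div]
    refine one_div_le_one_div_of_le (by positivity) ?_
    have hquad := quadratic_le_exp_of_nonneg (by positivity : 0 ≤ 6 * d)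
    calc 1 + 6 * d + 18 * d ^ 2 = 1 + 6 * d + (6 * d) ^ 2 / 2 := by ring
      _ ≤ exp (6 * d) := hquad
      _ ≤ exp (2 * π * x * d) := by
        gcongr
        nlinarith [pi_gt_three]
  have hpoly : 0.1 * d ≤ 1 / 2 - d - (1 / 2 + d) * (1 / (1 + 6 * d + 18 * d ^ 2)) := by
    rw [mul_one_div, le_sub_comm, div_le_iff₀ (by positivity)]
    nlinarith [mul_nonneg hd (by nlinarith : 0 ≤ 0.9 + 2.4 * d - 19.8 * d ^ 2)]
  have hsplit : exp (-π * (-1 + (1 / 2 - d)) ^ 2 * x) =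
      exp (-(2 * π * x * d)) * exp (-π * (1 / 2 - d) ^ 2 * x) := by
    rw [← exp_add]
    ring_nf
  calc 0.1 * (1 / 2 - (1 / 2 - d)) * exp (-π * (1 / 2 - d) ^ 2 * x)
      = 0.1 * d * exp (-π * (1 / 2 - d) ^ 2 * x) := by ring
    _ ≤ (1 / 2 - d - (1 / 2 + d) * exp (-(2 * π * x * d))) * exp (-π * (1 / 2 - d) ^ 2 * x) := by
        gcongr
        exact hpoly.trans (by gcongr)
    _ = _ := by
        rw [hsplit]
        ring

lemma le_oddKernel_of_quarter_le {t x : ℝ} (hx : 1 ≤ x) (ht_quarter : 1 / 4 ≤ t)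
    (ht_half : t ≤ 1 / 2) : 0.1 * (1 / 2 - t) * exp (-π * t ^ 2 * x) ≤ oddKernel t x := by
  have hfold := (hasSum_int_oddKernel t (zero_lt_one.trans_le hx)).nat_add_neg_add_one
  have hcentral := le_hasSum hfold 0 fun n hn => ?_
  · refine (le_central_pair_of_quarter_le hx ht_quarter ht_half).trans (le_of_eq_of_le ?_ hcentral)
    simp
  · have hn_one : (1 : ℝ) ≤ n := mod_cast Nat.one_le_iff_ne_zero.2 hn
    have hanti := antitoneOn_mul_exp_neg_sq hx (mem_Ici.2 (by linarith : 1 / 2 ≤ (n : ℝ) + t))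
      (mem_Ici.2 (by linarith : 1 / 2 ≤ (n : ℝ) + 1 - t)) (by linarith)
    rw [show (((-((n : ℤ) + 1) : ℤ) : ℝ) + t) = -((n : ℝ) + 1 - t) by push_cast; ring, neg_sq,
      Int.cast_natCast]
    simp only at hanti
    linarith

lemma mul_sin_two_pi_mul_le_oddKernel {t x : ℝ} (hx : 1 ≤ x) (ht : 0 ≤ t) (ht_half : t ≤ 1 / 2) :
    0.01 * exp (-(π * x / 4)) * sin (2 * π * t) ≤ oddKernel t x := by
  have hexp : exp (-(π * x / 4)) ≤ exp (-π * t ^ 2 * x) := by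
    gcongr
    nlinarith [mul_nonneg (by positivity : 0 ≤ π * x) (by nlinarith : 0 ≤ 1 / 4 - t ^ 2)]
  have hdist : ∀ d, 0 ≤ d → sin (2 * π * d) = sin (2 * π * t) →
      0.1 * d * exp (-π * t ^ 2 * x) ≤ oddKernel t x →
        0.01 * exp (-(π * x / 4)) * sin (2 * π * t) ≤ oddKernel t x := by
    intro d hd hsin_eq hkernel
    have hsin : 0.01 * sin (2 * π * t) ≤ 0.1 * d := by
      rw [← hsin_eq]
      nlinarith [sin_le (by positivity : 0 ≤ 2 * π * d), pi_lt_d2]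
    calc 0.01 * exp (-(π * x / 4)) * sin (2 * π * t)
        = 0.01 * sin (2 * π * t) * exp (-(π * x / 4)) := by ring
      _ ≤ 0.1 * d * exp (-π * t ^ 2 * x) := by gcongr
      _ ≤ oddKernel t x := hkernel
  rcases le_total t (1 / 4) with h | h
  · exact hdist t ht rfl (le_oddKernel_of_le_quarter hx ht h)
  · refine hdist (1 / 2 - t) (by linarith) ?_ (le_oddKernel_of_quarter_le hx h ht_half)
    rw [← sin_pi_sub]
    ring_nf

lemma add_two_sq_mul_exp_neg_le {Y : ℝ} (hY : 0 ≤ Y) (n : ℕ) :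
    ((n + 2 : ℕ) : ℝ) ^ 2 * exp (-Y * ((n + 2 : ℕ) : ℝ) ^ 2) ≤
      exp (-Y) * (4 * exp (-3 * Y)) ^ (n + 1) := by
  have hcount : ((n + 2 : ℕ) : ℝ) ≤ 2 ^ (n + 1) := mod_cast Nat.lt_two_pow_self (n := n + 1)
  calc _ ≤ (2 ^ (n + 1)) ^ 2 * exp (-Y + (n + 1 : ℕ) * (-3 * Y)) := by
        gcongr
        push_cast
        nlinarith [mul_nonneg hY (Nat.cast_nonneg (α := ℝ) n)]
    _ = exp (-Y) * (4 * exp (-3 * Y)) ^ (n + 1) := by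
        rw [exp_add, exp_nat_mul, mul_pow, ← pow_mul, mul_comm (n + 1), pow_mul]
        norm_num
        ring

lemma norm_oddKernel_term_add_two_le {t x Y : ℝ} (hx : 0 < x) (hY : 0 ≤ Y) (n : ℕ) :
    ‖((n + 2 : ℕ) : ℝ) * (exp (-Y * ((n + 2 : ℕ) : ℝ) ^ 2) *
        oddKernel (((n + 2 : ℕ) : ℝ) * t : ℝ) x)‖ ≤
      0.2 * √x * |sin (2 * π * t)| * (exp (-Y) * (4 * exp (-3 * Y)) ^ (n + 1)) := by
  have hkernel : |oddKernel (((n + 2 : ℕ) : ℝ) * t : ℝ) x| ≤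
      0.2 * √x * (((n + 2 : ℕ) : ℝ) * |sin (2 * π * t)|) := by
    refine (abs_oddKernel_le _ hx).trans ?_
    rw [mul_left_comm (2 * π)]
    gcongr
    exact abs_sin_nat_mul_le _ _
  rw [norm_mul, norm_mul, RCLike.norm_natCast, norm_of_nonneg (exp_nonneg _), norm_eq_abs]
  calc _ ≤ ((n + 2 : ℕ) : ℝ) * (exp (-Y * ((n + 2 : ℕ) : ℝ) ^ 2) *
        (0.2 * √x * (((n + 2 : ℕ) : ℝ) * |sin (2 * π * t)|))) := by gcongr
    _ = 0.2 * √x * |sin (2 * π * t)| *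
        (((n + 2 : ℕ) : ℝ) ^ 2 * exp (-Y * ((n + 2 : ℕ) : ℝ) ^ 2)) := by ring
    _ ≤ _ := mul_le_mul_of_nonneg_left (add_two_sq_mul_exp_neg_le hY n) (by positivity)

lemma sqrt_mul_exp_neg_three_mul_le {x Y : ℝ} (hx : 1 ≤ x) (hY : 3 * π / 4 * x ≤ Y) :
    √x * exp (-3 * Y) ≤ 0.005 * exp (-(π * x / 4)) := by
  have hsqrt : √x ≤ exp (x - 1) := by
    rw [sqrt_le_left (exp_nonneg _)]
    nlinarith [add_one_le_exp (x - 1)]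
  calc √x * exp (-3 * Y) ≤ exp (x - 1) * exp (-3 * Y) := by gcongr
    _ ≤ exp (-6) * exp (-(π * x / 4)) := by
      rw [← exp_add, ← exp_add]
      refine exp_le_exp.2 ?_
      nlinarith [pi_gt_three]
    _ ≤ 0.005 * exp (-(π * x / 4)) := by
      gcongr
      exact exp_neg_six_le

lemma four_mul_exp_neg_three_mul_le {x Y : ℝ} (hx : 1 ≤ x) (hY : 3 * π / 4 * x ≤ Y) :
    4 * exp (-3 * Y) ≤ 0.02 := by
  have hsqrt : exp (-3 * Y) ≤ √x * exp (-3 * Y) :=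
    le_mul_of_one_le_left (exp_nonneg _) (one_le_sqrt.2 hx)
  have hexp : exp (-(π * x / 4)) ≤ 1 := exp_le_one_iff.2 (neg_nonpos.2 (by positivity))
  linarith [sqrt_mul_exp_neg_three_mul_le hx hY]

lemma sqrt_mul_geometric_sum_le {x Y : ℝ} (hx : 1 ≤ x) (hY : 3 * π / 4 * x ≤ Y) :
    √x * (4 * exp (-3 * Y) * (1 - 4 * exp (-3 * Y))⁻¹) ≤ 0.025 * exp (-(π * x / 4)) := by
  have hratio := four_mul_exp_neg_three_mul_le hx hY
  have hinv : (1 - 4 * exp (-3 * Y))⁻¹ ≤ 1.25 := by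
    rw [inv_le_comm₀ (by linarith) (by norm_num)]
    linarith
  calc _ ≤ √x * (4 * exp (-3 * Y) * 1.25) := by gcongr
    _ = 5 * (√x * exp (-3 * Y)) := by ring
    _ ≤ 5 * (0.005 * exp (-(π * x / 4))) := by
      gcongr 5 * ?_
      exact sqrt_mul_exp_neg_three_mul_le hx hY
    _ = _ := by ring

lemma le_of_hasSum_oddKernel {t x Y T : ℝ} (hx : 1 ≤ x) (hY : 3 * π / 4 * x ≤ Y) (ht : 0 ≤ t)
    (ht_half : t ≤ 1 / 2)
    (hT : HasSum (fun n : ℕ => n * (exp (-Y * n ^ 2) * oddKernel (n * t : ℝ) x)) T) :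
    0.005 * exp (-(π * x / 4) - Y) * sin (2 * π * t) ≤ T := by
  have hY_nonneg : 0 ≤ Y := by nlinarith [pi_pos]
  have hsin : 0 ≤ sin (2 * π * t) :=
    sin_nonneg_of_nonneg_of_le_pi (by positivity) (by nlinarith [pi_pos])
  have hgeom : HasSum (fun n : ℕ => (4 * exp (-3 * Y)) ^ (n + 1))
      (4 * exp (-3 * Y) * (1 - 4 * exp (-3 * Y))⁻¹) := by
    simpa only [pow_succ'] using (hasSum_geometric_of_lt_one (by positivity)
      (by linarith [four_mul_exp_neg_three_mul_le hx hY])).mul_left (4 * exp (-3 * Y))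
  have htail := ((hasSum_nat_add_iff' 2).2 hT).norm_le_of_bounded
    ((hgeom.mul_left (exp (-Y))).mul_left _)
    (norm_oddKernel_term_add_two_le (zero_lt_one.trans_le hx) hY_nonneg)
  simp only [Finset.sum_range_succ, Finset.sum_range_zero, Nat.cast_zero, Nat.cast_one, one_pow,
    zero_mul, one_mul, mul_one, zero_add, abs_of_nonneg hsin] at htail
  have hmain := mul_le_mul_of_nonneg_left
    (mul_sin_two_pi_mul_le_oddKernel hx ht ht_half) (exp_nonneg (-Y))
  have herror := mul_le_mul_of_nonneg_left (sqrt_mul_geometric_sum_le hx hY)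
    (by positivity : 0 ≤ 0.2 * sin (2 * π * t) * exp (-Y))
  rw [sub_eq_add_neg, exp_add]
  linarith [(abs_le.1 htail).1]

lemma energySlope_le_neg_sin_skew {α y : ℝ} (hα : 2 ≤ α) (hy : y ∈ Icc 1 √3) :
    energySlope α y ≤ -(0.01 * exp (-(π * α)) * sin (2 * π * skew y)) := by
  have hα_pos : 0 < α := by linarith
  have hy_pos : 0 < y := zero_lt_one.trans_le hy.1
  have hy_sq : y ^ 2 ≤ 3 := (le_sqrt' hy_pos).1 hy.2
  have hy_sq_ge : 1 ≤ y ^ 2 := one_le_pow₀ hy.1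
  obtain ⟨hskew_nonneg, hskew_le⟩ := skew_mem_Icc hy
  have hsin : 0 ≤ sin (2 * π * skew y) :=
    sin_nonneg_of_nonneg_of_le_pi (by positivity) (by nlinarith [pi_pos])
  set x := α * (y ^ 2 + 1) / (4 * y) with hx
  set Y := π * α * y / (y ^ 2 + 1) with hY
  have hx_one : 1 ≤ x := by
    rw [hx, le_div_iff₀ (by positivity)]
    nlinarith [sq_nonneg (y - 1)]
  have hY_ge : 3 * π / 4 * x ≤ Y := by
    rw [hx, hY, ← mul_div_assoc, div_le_div_iff₀ (by positivity) (by positivity)]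
    nlinarith [mul_nonneg (mul_nonneg pi_pos.le hα_pos.le)
      (mul_nonneg (by linarith : 0 ≤ 3 - y ^ 2) (by linarith : 0 ≤ 3 * y ^ 2 - 1))]
  have hexp : exp (-(π * α)) ≤ exp (-(π * x / 4) - Y) := by
    have hx_le : x ≤ α := by
      rw [hx, div_le_iff₀ (by positivity)]
      nlinarith [hy.1]
    have hY_le : Y ≤ π * α / 2 := by
      rw [hY, div_le_div_iff₀ (by positivity) (by positivity)]
      nlinarith [mul_nonneg (mul_nonneg pi_pos.le hα_pos.le) (sq_nonneg (y - 1))]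
    refine exp_le_exp.2 ?_
    linarith [mul_le_mul_of_nonneg_left hx_le pi_pos.le, mul_pos pi_pos hα_pos]
  have hbound := le_of_hasSum_oddKernel hx_one hY_ge hskew_nonneg hskew_le
    (hasSum_nat_oddKernel_skew hα_pos hy_pos)
  rw [le_div_iff₀ (by positivity)] at hbound
  rw [le_neg]
  calc 0.01 * exp (-(π * α)) * sin (2 * π * skew y)
      = 0.005 * exp (-(π * α)) * sin (2 * π * skew y) * 2 := by ring
    _ ≤ 0.005 * exp (-(π * x / 4) - Y) * sin (2 * π * skew y) * (y ^ 2 + 1) := by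
      gcongr
      linarith
    _ ≤ -energySlope α y := hbound

/-! ### Growth of the slope beyond `√3` -/

/-- The `y`-derivative of `slopeTerm β y v` multiplied by `-y²`. -/
noncomputable def slopeDecay (β y : ℝ) (v : ℝ × ℝ) : ℝ :=
  (2 * v.1 ^ 2 * y ^ 3 - β * (v.2 ^ 2 - v.1 ^ 2 * y ^ 2) ^ 2) * exp (-β * rectForm y v)

lemma hasDerivAt_slopeTerm (β : ℝ) (v : ℝ × ℝ) {y : ℝ} (hy : y ≠ 0) :
    HasDerivAt (fun y => slopeTerm β y v) (-slopeDecay β y v / y ^ 2) y := by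
  have hform : HasDerivAt (fun y => rectForm y v) (v.1 ^ 2 - v.2 ^ 2 / y ^ 2) y := by
    refine (((hasDerivAt_id y).const_mul (v.1 ^ 2)).add
      ((hasDerivAt_inv hy).const_mul (v.2 ^ 2))).congr_deriv ?_
    ring
  have hcoeff : HasDerivAt (fun y => v.2 ^ 2 - v.1 ^ 2 * y ^ 2) (-(2 * v.1 ^ 2 * y)) y := by
    refine (((hasDerivAt_pow 2 y).const_mul (v.1 ^ 2)).const_sub (v.2 ^ 2)).congr_deriv ?_
    push_cast
    ring
  refine (hcoeff.mul (hform.const_mul (-β)).exp).congr_deriv ?_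
  rw [slopeDecay]
  field_simp
  ring

lemma hasDerivAt_exp_neg_div (β : ℝ) {y : ℝ} (hy : y ≠ 0) :
    HasDerivAt (fun y => exp (-β / y)) (β / y ^ 2 * exp (-β / y)) y := by
  refine ((hasDerivAt_inv hy).const_mul (-β)).exp.congr_deriv ?_
  rw [← div_eq_mul_inv]
  ring

lemma monotoneOn_slopeTerm_sub {β l : ℝ} {v : ℝ × ℝ} {s : Set ℝ} (hs : Convex ℝ s)
    (hpos : ∀ y ∈ s, 0 < y) (h : ∀ y ∈ s, slopeDecay β y v ≤ -l * β * exp (-β / y)) :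
    MonotoneOn (fun y => slopeTerm β y v - l * exp (-β / y)) s := by
  have hderiv : ∀ y ∈ s, HasDerivAt (fun y => slopeTerm β y v - l * exp (-β / y))
      (-slopeDecay β y v / y ^ 2 - l * (β / y ^ 2 * exp (-β / y))) y := fun y hy =>
    (hasDerivAt_slopeTerm β v (hpos y hy).ne').sub
      ((hasDerivAt_exp_neg_div β (hpos y hy).ne').const_mul l)
  refine monotoneOn_of_deriv_nonneg hs
    (fun y hy => (hderiv y hy).continuousAt.continuousWithinAt)
    (fun y hy => (hderiv y (interior_subset hy)).differentiableAt.differentiableWithinAt)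
    fun y hy => ?_
  have hy := interior_subset hy
  rw [(hderiv y hy).deriv, show -slopeDecay β y v / y ^ 2 - l * (β / y ^ 2 * exp (-β / y)) =
    (-l * β * exp (-β / y) - slopeDecay β y v) / y ^ 2 by ring]
  exact div_nonneg (sub_nonneg.2 (h y hy)) (sq_nonneg y)

lemma slopeDecay_le_of_sq_eq_quarter {β y : ℝ} {v : ℝ × ℝ} (hβ : 6 ≤ β) (hy : √3 ≤ y)
    (hm : v.1 ^ 2 = 1 / 4) (hn : v.2 ^ 2 = 1 / 4) :
    slopeDecay β y v ≤ 0.2 * β * exp (-β / y) := by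
  have hy_sq : 3 ≤ y ^ 2 := (sqrt_le_iff.1 hy).2
  have hy_pos : 0 < y := (by positivity : 0 < √3).trans_le hy
  have hcoeff : 2 * v.1 ^ 2 * y ^ 3 - β * (v.2 ^ 2 - v.1 ^ 2 * y ^ 2) ^ 2 ≤ 0.2 * β := by
    have hquartic : 0 ≤ 3 * y ^ 4 - 4 * y ^ 3 - 6 * y ^ 2 + 12.6 := by
      nlinarith [sq_nonneg (y ^ 2 - 0.6667 * y - 1.539), sq_nonneg (y - 1.618)]
    rw [hm, hn]
    nlinarith [mul_nonneg (sub_nonneg.2 hβ) (sq_nonneg (y ^ 2 - 1))]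
  have hexp : exp (-β * rectForm y v) ≤ exp (-β / y) := by
    have hform : 1 / y ≤ rectForm y v := by
      rw [rectForm, hm, hn, div_le_iff₀ hy_pos, add_mul, div_mul_cancel₀ _ hy_pos.ne']
      linarith
    rw [div_eq_mul_one_div]
    exact exp_le_exp.2 (mul_le_mul_of_nonpos_left hform (by linarith))
  exact mul_le_mul hcoeff hexp (exp_nonneg _) (by linarith)

lemma eight_mul_pow_three_mul_exp_neg_le {s u : ℝ} (hs : 2 ≤ s) (hu : 0 ≤ u) :
    8 * u ^ 3 * exp (-(s * u)) ≤ 1.35 := by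
  have he : 20 ≤ exp 1 ^ 3 :=
    le_trans (by norm_num) (pow_le_pow_left₀ (by norm_num) exp_one_gt_d9.le 3)
  have hexp := pow_div_mul_exp_one_le_exp (by positivity : 0 ≤ 2 * u) three_ne_zero
  rw [exp_neg, ← div_eq_mul_inv, div_le_iff₀ (exp_pos _)]
  calc 8 * u ^ 3 = 1.35 * (8 / 27 * u ^ 3 * 20) := by ring
    _ ≤ 1.35 * (8 / 27 * u ^ 3 * exp 1 ^ 3) := by gcongr
    _ = 1.35 * (2 * u / (3 : ℕ) * exp 1) ^ 3 := by
      push_cast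
      ring
    _ ≤ 1.35 * exp (2 * u) := by gcongr
    _ ≤ 1.35 * exp (s * u) := by gcongr

lemma sq_add_or_sq_sub_eq_sq_natAbs_add (a b : ℤ) :
    (a + b) ^ 2 = ((a.natAbs + b.natAbs : ℕ) : ℤ) ^ 2 ∨
      (a - b) ^ 2 = ((a.natAbs + b.natAbs : ℕ) : ℤ) ^ 2 := by
  push_cast
  rcases abs_cases a with ⟨ha, _⟩ | ⟨ha, _⟩ <;> rcases abs_cases b with ⟨hb, _⟩ | ⟨hb, _⟩ <;>
    rw [ha, hb]
  exacts [.inl (by ring), .inr (by ring), .inr (by ring), .inl (by ring)]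

lemma two_le_natAbs_add_natAbs {a b : ℤ} (h : 3 ≤ a ^ 2 + a * b + b ^ 2) :
    2 ≤ a.natAbs + b.natAbs := by
  by_contra! hlt
  have ha : -1 ≤ a ∧ a ≤ 1 := by omega
  have hb : -1 ≤ b ∧ b ≤ 1 := by omega
  obtain ⟨ha₁, ha₂⟩ := ha
  obtain ⟨hb₁, hb₂⟩ := hb
  interval_cases a <;> interval_cases b <;> simp_all

lemma exp_neg_seven_fifths_mul_le_pow {w : ℝ} {N : ℕ} (h : 1.4 * N ≤ w) :
    exp (-w) ≤ (1 / 4) ^ N := by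
  have hlog : exp (-1.4) ≤ 1 / 4 := by
    rw [← le_log_iff_exp_le (by norm_num), one_div, log_inv,
      show (4 : ℝ) = 2 ^ 2 by norm_num, log_pow]
    have := log_two_lt_d9
    push_cast
    linarith
  calc exp (-w) ≤ exp (N * -1.4) := exp_le_exp.2 (by linarith)
    _ = exp (-1.4) ^ N := exp_nat_mul _ _
    _ ≤ (1 / 4) ^ N := by gcongr

lemma exp_neg_rectForm_le_pow {s y : ℝ} {p : ℤ × ℤ} (hs : 2 ≤ s) (hy : √3 ≤ y)
    (hm : p.1 + p.2 ≠ 0) (hp : 3 ≤ p.1 ^ 2 + p.1 * p.2 + p.2 ^ 2) :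
    exp (-(s * ((latticePoint p).1 ^ 2 * y + 2 * (latticePoint p).2 ^ 2 / y))) ≤
      (1 / 4) ^ (p.1.natAbs + p.2.natAbs) := by
  have hy_low : 1.7 ≤ y := (le_sqrt' (by norm_num)).2 (by norm_num) |>.trans hy
  have hsq := sq_add_or_sq_sub_eq_sq_natAbs_add p.1 p.2
  have hN : 2 ≤ p.1.natAbs + p.2.natAbs := two_le_natAbs_add_natAbs hp
  refine exp_neg_seven_fifths_mul_le_pow ?_
  generalize p.1.natAbs + p.2.natAbs = N at hN hsq ⊢
  have hN : (2 : ℝ) ≤ N := mod_cast hN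
  have hm_sq : (1 : ℝ) ≤ ((p.1 : ℝ) + p.2) ^ 2 :=
    mod_cast (one_le_sq_iff_one_le_abs (p.1 + p.2)).2 (Int.one_le_abs hm)
  have hform : 0 ≤ (latticePoint p).1 ^ 2 * y + 2 * (latticePoint p).2 ^ 2 / y := by
    have : 0 < y := by linarith
    positivity
  refine le_trans ?_ (mul_le_mul_of_nonneg_right hs hform)
  have hscaled : 2 * ((latticePoint p).1 ^ 2 * y + 2 * (latticePoint p).2 ^ 2 / y) =
      (((p.1 : ℝ) + p.2) ^ 2 * y ^ 2 / 2 + ((p.1 : ℝ) - p.2) ^ 2) / y := by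
    have : y ≠ 0 := by linarith
    simp only [latticePoint]
    field_simp
  rw [hscaled, le_div_iff₀ (by linarith)]
  rcases hsq with hsq | hsq
  · have hsq : ((p.1 : ℝ) + p.2) ^ 2 = (N : ℝ) ^ 2 := mod_cast hsq
    have hNy : 1.7 * 2 ≤ y * N := mul_le_mul hy_low hN zero_le_two (by linarith)
    rw [hsq]
    nlinarith [sq_nonneg ((p.1 : ℝ) - p.2)]
  · have hsq : ((p.1 : ℝ) - p.2) ^ 2 = (N : ℝ) ^ 2 := mod_cast hsq
    rw [hsq]
    nlinarith [mul_le_mul_of_nonneg_right hm_sq (sq_nonneg y), sq_nonneg (1.4 * y - 2 * N)]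

lemma half_pow_le_of_three_le {p : ℤ × ℤ} (hm : p.1 + p.2 ≠ 0)
    (hp : 3 ≤ p.1 ^ 2 + p.1 * p.2 + p.2 ^ 2) :
    (1 / 2 : ℝ) ^ (p.1.natAbs + p.2.natAbs) ≤ 2 * (latticePoint p).1 ^ 4 := by
  have hfourth : 2 * (latticePoint p).1 ^ 4 = (((p.1 + p.2) ^ 2) ^ 2 : ℤ) / 8 := by
    rw [latticePoint]
    push_cast
    ring
  rw [hfourth]
  rcases (Int.one_le_abs hm).eq_or_lt with hone | htwo
  · have hN : 3 ≤ p.1.natAbs + p.2.natAbs := by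
      have htwo := two_le_natAbs_add_natAbs hp
      rcases (abs_eq zero_le_one).1 hone.symm with hsum | hsum <;> omega
    rw [← sq_abs (p.1 + p.2), ← hone]
    exact (pow_le_pow_of_le_one (by norm_num) (by norm_num) hN).trans (by norm_num)
  · have hsq : (2 : ℤ) ^ 2 ≤ (p.1 + p.2) ^ 2 := by
      rw [← sq_abs (p.1 + p.2)]
      exact pow_le_pow_left₀ zero_le_two htwo 2
    have hsq : (16 : ℝ) ≤ (((p.1 + p.2) ^ 2) ^ 2 : ℤ) :=
      mod_cast pow_le_pow_left₀ (by norm_num) hsq 2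
    have hpow : (1 / 2 : ℝ) ^ (p.1.natAbs + p.2.natAbs) ≤ 1 :=
      pow_le_one₀ (by norm_num) (by norm_num)
    linarith

lemma exp_neg_rectForm_le_mul_half_pow {s y : ℝ} {p : ℤ × ℤ} (hs : 2 ≤ s) (hy : √3 ≤ y)
    (hm : p.1 + p.2 ≠ 0) (hp : 3 ≤ p.1 ^ 2 + p.1 * p.2 + p.2 ^ 2) :
    exp (-(s * ((latticePoint p).1 ^ 2 * y + 2 * (latticePoint p).2 ^ 2 / y))) ≤
      2 * (latticePoint p).1 ^ 4 * (1 / 2) ^ (p.1.natAbs + p.2.natAbs) := by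
  refine (exp_neg_rectForm_le_pow hs hy hm hp).trans ?_
  rw [show (1 / 4 : ℝ) = 1 / 2 * (1 / 2) by norm_num, mul_pow]
  gcongr
  exact half_pow_le_of_three_le hm hp

lemma exp_neg_mul_rectForm_le {s y m n : ℝ} (hs : 0 ≤ s) (hy : √3 ≤ y)
    (hmn : 3 ≤ 3 * m ^ 2 + n ^ 2) :
    exp (-(3 * s) * rectForm y (m, n)) ≤
      exp (-(s * (m ^ 2 * y))) * exp (-(s * (m ^ 2 * y + 2 * n ^ 2 / y))) * exp (-(3 * s) / y) := by
  have hy_pos : 0 < y := (by positivity : 0 < √3).trans_le hy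
  have hform : 3 / y ≤ rectForm y (m, n) := by
    have hy_sq : 3 ≤ y ^ 2 := (sqrt_le_iff.1 hy).2
    rw [rectForm, div_le_iff₀ hy_pos, add_mul, div_mul_cancel₀ _ hy_pos.ne']
    nlinarith [mul_nonneg (sq_nonneg m) (sub_nonneg.2 hy_sq)]
  rw [← exp_add, ← exp_add, exp_le_exp]
  calc -(3 * s) * rectForm y (m, n) ≤ -(2 * s) * rectForm y (m, n) - s * (3 / y) := by
        nlinarith [mul_le_mul_of_nonneg_left hform hs]
    _ = _ := by rw [rectForm]; ring

lemma slopeDecay_le_of_three_le {β y : ℝ} {p : ℤ × ℤ} (hβ : 6 ≤ β) (hy : √3 ≤ y)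
    (hp : 3 ≤ p.1 ^ 2 + p.1 * p.2 + p.2 ^ 2) :
    slopeDecay β y (latticePoint p) ≤
      0.12 * (1 / 2) ^ (p.1.natAbs + p.2.natAbs) * β * exp (-β / y) := by
  have hy_pos : 0 < y := (by positivity : 0 < √3).trans_le hy
  obtain ⟨s, rfl⟩ : ∃ s, β = 3 * s := ⟨β / 3, by ring⟩
  have hs : 2 ≤ s := by linarith
  have hdrop : slopeDecay (3 * s) y (latticePoint p) ≤
      2 * (latticePoint p).1 ^ 2 * y ^ 3 * exp (-(3 * s) * rectForm y (latticePoint p)) :=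
    mul_le_mul_of_nonneg_right (sub_le_self _ (by positivity)) (exp_nonneg _)
  refine hdrop.trans ?_
  rcases eq_or_ne (p.1 + p.2) 0 with hm | hm
  · have hm : (latticePoint p).1 = 0 := by
      rw [latticePoint, ← Int.cast_add, hm, Int.cast_zero, zero_div]
    rw [hm]
    simp only [ne_eq, OfNat.ofNat_ne_zero, not_false_eq_true, zero_pow, mul_zero, zero_mul]
    positivity
  have hmn : 3 ≤ 3 * (latticePoint p).1 ^ 2 + (latticePoint p).2 ^ 2 := by
    have hp : (3 : ℝ) ≤ (p.1 : ℝ) ^ 2 + p.1 * p.2 + p.2 ^ 2 := mod_cast hp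
    simp only [latticePoint]
    linarith
  have hcube : 8 * ((latticePoint p).1 ^ 2 * y) ^ 3 * exp (-(s * ((latticePoint p).1 ^ 2 * y))) ≤
      1.35 := eight_mul_pow_three_mul_exp_neg_le hs (by positivity)
  have hexp := exp_neg_mul_rectForm_le (by linarith : 0 ≤ s) hy hmn
  have htail := exp_neg_rectForm_le_mul_half_pow hs hy hm hp
  generalize latticePoint p = v at *
  calc 2 * v.1 ^ 2 * y ^ 3 * exp (-(3 * s) * rectForm y v)
      ≤ 2 * v.1 ^ 2 * y ^ 3 * (exp (-(s * (v.1 ^ 2 * y))) *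
        (2 * v.1 ^ 4 * (1 / 2) ^ (p.1.natAbs + p.2.natAbs)) * exp (-(3 * s) / y)) := by
        gcongr
        exact hexp.trans (by gcongr)
    _ = 8 * (v.1 ^ 2 * y) ^ 3 * exp (-(s * (v.1 ^ 2 * y))) *
        ((1 / 2) ^ (p.1.natAbs + p.2.natAbs) * exp (-(3 * s) / y) / 2) := by ring
    _ ≤ 1.35 * ((1 / 2) ^ (p.1.natAbs + p.2.natAbs) * exp (-(3 * s) / y) / 2) := by gcongr
    _ = 0.12 * (1 / 2) ^ (p.1.natAbs + p.2.natAbs) * (1.35 / 0.24) * exp (-(3 * s) / y) := by ring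
    _ ≤ 0.12 * (1 / 2) ^ (p.1.natAbs + p.2.natAbs) * (3 * s) * exp (-(3 * s) / y) := by
        gcongr
        linarith

/-- The index pairs of the lattice points `(0, ±1)`. -/
def axisPoints : Finset (ℤ × ℤ) := {(1, -1), (-1, 1)}

/-- The index pairs of the lattice points `(±1/2, ±1/2)`. -/
def cornerPoints : Finset (ℤ × ℤ) := {(1, 0), (-1, 0), (0, 1), (0, -1)}

/-- A lower bound for the growth in `y ≥ √3` of the term of `energySlope` with index `p`, in units
of the growth of the term `e^{-πα/y}` of `(0, 1)`. -/
noncomputable def growthBound (p : ℤ × ℤ) : ℝ :=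
  (if p ∈ axisPoints then 1 else 0) + (if p ∈ cornerPoints then -0.2 else 0) +
    -0.12 * ((1 / 2) ^ p.1.natAbs * (1 / 2) ^ p.2.natAbs)

lemma hasSum_half_pow_natAbs : HasSum (fun n : ℤ => (1 / 2 : ℝ) ^ n.natAbs) 3 := by
  have hneg : HasSum (fun n : ℕ => (1 / 2 : ℝ) ^ (-((n : ℤ) + 1)).natAbs) (2 * (1 / 2)) := by
    refine (hasSum_geometric_two.mul_right (1 / 2)).congr_fun fun n => ?_
    rw [← pow_succ, show (-((n : ℤ) + 1)).natAbs = n + 1 by omega]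
  have hsum := HasSum.of_nat_of_neg_add_one (f := fun n : ℤ => (1 / 2 : ℝ) ^ n.natAbs)
    hasSum_geometric_two hneg
  norm_num at hsum ⊢
  exact hsum

lemma hasSum_ite_mem {ι : Type*} [DecidableEq ι] (F : Finset ι) (c : ℝ) :
    HasSum (fun i => if i ∈ F then c else 0) (F.card * c) := by
  have hsum : HasSum (fun i => if i ∈ F then c else 0) (∑ i ∈ F, if i ∈ F then c else 0) :=
    hasSum_sum_of_ne_finset_zero fun i hi => if_neg hi
  rwa [Finset.sum_congr rfl fun i hi => if_pos hi, Finset.sum_const, nsmul_eq_mul] at hsum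

lemma hasSum_growthBound : HasSum growthBound 0.12 := by
  have hweight := hasSum_half_pow_natAbs.mul hasSum_half_pow_natAbs
    (hasSum_half_pow_natAbs.summable.mul_of_nonneg hasSum_half_pow_natAbs.summable
      (fun n => by positivity) (fun n => by positivity))
  have hsum := ((hasSum_ite_mem axisPoints 1).add (hasSum_ite_mem cornerPoints (-0.2))).add
    (hweight.mul_left (-0.12))
  rw [show axisPoints.card = 2 by decide, show cornerPoints.card = 4 by decide] at hsum
  convert! hsum using 1
  norm_num

lemma three_le_of_notMem {p : ℤ × ℤ} (haxis : p ∉ axisPoints) (hcorner : p ∉ cornerPoints)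
    (hzero : p ≠ 0) : 3 ≤ p.1 ^ 2 + p.1 * p.2 + p.2 ^ 2 := by
  obtain ⟨a, b⟩ := p
  by_contra! hlt
  simp only at hlt
  obtain ⟨ha₁, ha₂⟩ := abs_lt_of_sq_lt_sq' (by nlinarith [sq_nonneg (a + 2 * b)] : a ^ 2 < 2 ^ 2)
    zero_le_two
  obtain ⟨hb₁, hb₂⟩ := abs_lt_of_sq_lt_sq' (by nlinarith [sq_nonneg (2 * a + b)] : b ^ 2 < 2 ^ 2)
    zero_le_two
  interval_cases a <;> interval_cases b <;> simp_all [axisPoints, cornerPoints]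

lemma slopeDecay_axis {β y : ℝ} {v : ℝ × ℝ} (hm : v.1 = 0) (hn : v.2 ^ 2 = 1) :
    slopeDecay β y v = -β * exp (-β / y) := by
  rw [slopeDecay, rectForm, hm, hn]
  ring_nf

lemma slopeDecay_latticePoint_le {β y : ℝ} (hβ : 6 ≤ β) (hy : √3 ≤ y) (p : ℤ × ℤ) :
    slopeDecay β y (latticePoint p) ≤ -growthBound p * β * exp (-β / y) := by
  have : 0 < β := by linarith
  have hweight : 0 < (1 / 2 : ℝ) ^ p.1.natAbs * (1 / 2) ^ p.2.natAbs := by positivity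
  by_cases haxis : p ∈ axisPoints
  · have hv : (latticePoint p).1 = 0 ∧ (latticePoint p).2 ^ 2 = 1 := by
      rcases Finset.mem_insert.1 haxis with rfl | haxis
      · norm_num [latticePoint]
      · rw [Finset.mem_singleton.1 haxis]
        norm_num [latticePoint]
    have hbound : growthBound p ≤ 1 := by
      rw [growthBound, if_pos haxis]
      split_ifs <;> linarith
    rw [slopeDecay_axis hv.1 hv.2]
    gcongr
    nlinarith
  by_cases hcorner : p ∈ cornerPoints
  · have hv : (latticePoint p).1 ^ 2 = 1 / 4 ∧ (latticePoint p).2 ^ 2 = 1 / 4 := by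
      simp only [cornerPoints, Finset.mem_insert, Finset.mem_singleton] at hcorner
      rcases hcorner with rfl | rfl | rfl | rfl <;> norm_num [latticePoint]
    refine (slopeDecay_le_of_sq_eq_quarter hβ hy hv.1 hv.2).trans ?_
    have hbound : growthBound p ≤ -0.2 := by
      rw [growthBound, if_neg haxis, if_pos hcorner]
      linarith
    gcongr
    linarith
  rw [growthBound, if_neg haxis, if_neg hcorner, ← pow_add, zero_add, zero_add, neg_mul (0.12 : ℝ),
    neg_neg]
  rcases eq_or_ne p 0 with rfl | hzero
  · have hv : latticePoint 0 = 0 := by simp [latticePoint]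
    rw [hv]
    simp only [slopeDecay, Prod.fst_zero, Prod.snd_zero]
    ring_nf
    positivity
  · exact slopeDecay_le_of_three_le hβ hy (three_le_of_notMem haxis hcorner hzero)

lemma energySlope_strictMonoOn {α : ℝ} (hα : 2 ≤ α) : StrictMonoOn (energySlope α) (Ici √3) := by
  have hpos : ∀ y ∈ Ici √3, 0 < y := fun y hy => (by positivity : 0 < √3).trans_le hy
  have hα_pos : 0 < α := by linarith
  have hβ : 6 ≤ π * α := by nlinarith [pi_gt_three]
  intro y₁ hy₁ y₂ hy₂ hlt
  have hgrowth : ∀ p, growthBound p * (exp (-(π * α) / y₂) - exp (-(π * α) / y₁)) ≤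
      slopeTerm (π * α) y₂ (latticePoint p) - slopeTerm (π * α) y₁ (latticePoint p) := fun p => by
    have hmono := monotoneOn_slopeTerm_sub (convex_Ici √3) hpos
      (fun y hy => slopeDecay_latticePoint_le hβ hy p) hy₁ hy₂ hlt.le
    simp only at hmono
    linarith
  have hunit : exp (-(π * α) / y₁) < exp (-(π * α) / y₂) := by
    rw [exp_lt_exp, neg_div, neg_div, neg_lt_neg_iff]
    exact div_lt_div_of_pos_left (by positivity) (hpos y₁ hy₁) hlt
  have hsum := hasSum_le hgrowth (hasSum_growthBound.mul_right _)
    ((hasSum_slopeTerm hα_pos (hpos y₂ hy₂)).sub (hasSum_slopeTerm hα_pos (hpos y₁ hy₁)))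
  linarith

/-! ### Monotonicity of the energy and its concavity at the square lattice -/

lemma exists_energySlope_eq_mul {α : ℝ} (hα : 0 < α) :
    ∃ c > 0, ∃ β ≥ 2, ∀ y > 0, energySlope α y = c * energySlope β y := by
  rcases le_total 2 α with h | h
  · exact ⟨1, one_pos, α, h, fun y _ => (one_mul _).symm⟩
  · exact ⟨8 / α ^ 3, by positivity, 4 / α, (le_div_iff₀ hα).2 (by linarith), fun y hy =>
      energySlope_dual hα hy⟩

lemma exists_energySlope_le_neg_sin_skew {α : ℝ} (hα : 0 < α) :
    ∃ c > 0, ∀ y ∈ Icc 1 √3, energySlope α y ≤ -(c * sin (2 * π * skew y)) := by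
  obtain ⟨c, hc, β, hβ, hdual⟩ := exists_energySlope_eq_mul hα
  refine ⟨c * (0.01 * exp (-(π * β))), by positivity, fun y hy => ?_⟩
  rw [hdual y (zero_lt_one.trans_le hy.1), mul_assoc, ← mul_neg]
  exact mul_le_mul_of_nonneg_left (energySlope_le_neg_sin_skew hβ hy) hc.le

lemma energySlope_neg {α y : ℝ} (hα : 0 < α) (hy : y ∈ Ioo 1 √3) : energySlope α y < 0 := by
  obtain ⟨c, hc, hbound⟩ := exists_energySlope_le_neg_sin_skew hα
  obtain ⟨hskew_pos, hskew_lt⟩ := skew_mem_Ioo hy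
  have hsin : 0 < sin (2 * π * skew y) :=
    sin_pos_of_pos_of_lt_pi (by positivity) (by nlinarith [pi_pos])
  exact (hbound y (Ioo_subset_Icc_self hy)).trans_lt (neg_neg_of_pos (by positivity))

lemma energySlope_pos {α y : ℝ} (hα : 0 < α) (hy : √3 < y) : 0 < energySlope α y := by
  obtain ⟨c, hc, β, hβ, hdual⟩ := exists_energySlope_eq_mul hα
  have hmono := energySlope_strictMonoOn hβ self_mem_Ici hy.le hy
  rw [energySlope_sqrt_three (by linarith)] at hmono
  rw [hdual y ((sqrt_nonneg 3).trans_lt hy)]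
  exact mul_pos hc hmono

lemma one_lt_sqrt_three : 1 < √3 :=
  lt_sqrt_of_sq_lt (by norm_num)

lemma le_of_hasDerivAt_of_eventually_le_nhdsGT {f φ : ℝ → ℝ} {f' φ' x : ℝ}
    (hf : HasDerivAt f f' x) (hφ : HasDerivAt φ φ' x) (heq : f x = φ x)
    (hle : ∀ᶠ y in 𝓝[>] x, f y ≤ φ y) : f' ≤ φ' := by
  refine le_of_tendsto_of_tendsto (hasDerivAt_iff_tendsto_slope_left_right.1 hf).2
    (hasDerivAt_iff_tendsto_slope_left_right.1 hφ).2 ?_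
  filter_upwards [hle, self_mem_nhdsWithin] with y hy hxy
  rw [slope_def_field, slope_def_field, heq]
  exact div_le_div_of_nonneg_right (sub_le_sub_right hy _) (sub_nonneg.2 (mem_Ioi.1 hxy).le)

lemma deriv_energySlope_one_neg {α : ℝ} (hα : 0 < α) : deriv (energySlope α) 1 < 0 := by
  obtain ⟨c, hc, hbound⟩ := exists_energySlope_le_neg_sin_skew hα
  have hsin : HasDerivAt (fun y => -(c * sin (2 * π * skew y))) (-(c * (2 * π))) 1 := by
    refine ((hasDerivAt_skew_one.const_mul (2 * π)).sin.const_mul c).neg.congr_deriv ?_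
    simp [skew_one]
  refine (le_of_hasDerivAt_of_eventually_le_nhdsGT
    (differentiableAt_energySlope hα one_pos).hasDerivAt hsin ?_ ?_).trans_lt
    (neg_neg_of_pos (by positivity))
  · simp [energySlope_one, skew_one]
  · filter_upwards [Ioo_mem_nhdsGT one_lt_sqrt_three] with y hy
    exact hbound y (Ioo_subset_Icc_self hy)

lemma deriv_deriv_energy_one_neg {α : ℝ} (hα : 0 < α) : deriv (deriv (energy α)) 1 < 0 := by
  have hderiv : deriv (energy α) =ᶠ[𝓝 1] fun y => π * α / y ^ 2 * energySlope α y := by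
    filter_upwards [lt_mem_nhds one_pos] with y hy
    exact (hasDerivAt_energy hα hy).deriv
  have hcoeff : DifferentiableAt ℝ (fun y : ℝ => π * α / y ^ 2) 1 := by
    fun_prop (disch := norm_num)
  rw [hderiv.deriv_eq, deriv_fun_mul hcoeff (differentiableAt_energySlope hα one_pos),
    energySlope_one, mul_zero, zero_add]
  exact mul_neg_of_pos_of_neg (by positivity) (deriv_energySlope_one_neg hα)

lemma energy_strictAntiOn {α : ℝ} (hα : 0 < α) : StrictAntiOn (energy α) (Icc 1 √3) := by
  refine strictAntiOn_of_deriv_neg (convex_Icc _ _) (fun y hy => (hasDerivAt_energy hα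
    (zero_lt_one.trans_le hy.1)).continuousAt.continuousWithinAt) fun y hy => ?_
  rw [interior_Icc] at hy
  have hy_pos : 0 < y := zero_lt_one.trans hy.1
  rw [(hasDerivAt_energy hα hy_pos).deriv]
  exact mul_neg_of_pos_of_neg (by positivity) (energySlope_neg hα hy)

lemma energy_strictMonoOn {α : ℝ} (hα : 0 < α) : StrictMonoOn (energy α) (Ici √3) := by
  refine strictMonoOn_of_deriv_pos (convex_Ici _) (fun y hy => (hasDerivAt_energy hα
    ((sqrt_pos.2 three_pos).trans_le hy)).continuousAt.continuousWithinAt) fun y hy => ?_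
  rw [interior_Ici] at hy
  have hy_pos : 0 < y := (sqrt_nonneg 3).trans_lt hy
  rw [(hasDerivAt_energy hα hy_pos).deriv]
  exact mul_pos (by positivity) (energySlope_pos hα hy)

/-- `g_α(y) = θ₃(αy)θ₃(α/y) + θ₂(αy)θ₂(α/y)` is strictly decreasing on
`(1,√3)`, strictly increasing on `(√3,∞)`, has `g_α''(1) < 0`, and `y = √3` is the unique
minimizer on `[1,∞)`. -/
theorem g_alpha_properties (α : ℝ) (hα : 0 < α) (g : ℝ → ℝ)
    (hg : ∀ y : ℝ, g y = theta3 (α * y) * theta3 (α / y) + theta2 (α * y) * theta2 (α / y)) :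
    StrictAntiOn g (Set.Ioo 1 (Real.sqrt 3)) ∧
    StrictMonoOn g (Set.Ioi (Real.sqrt 3)) ∧
    deriv (deriv g) 1 < 0 ∧
    ∀ y ∈ Set.Ici (1 : ℝ), y ≠ Real.sqrt 3 → g (Real.sqrt 3) < g y := by
  obtain rfl : g = energy α := funext hg
  have hanti := energy_strictAntiOn hα
  have hmono := energy_strictMonoOn hα
  refine ⟨hanti.mono Ioo_subset_Icc_self, hmono.mono Ioi_subset_Ici_self,
    deriv_deriv_energy_one_neg hα, fun y hy hne => ?_⟩
  rcases hne.lt_or_gt with hlt | hgt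
  · exact hanti ⟨hy, hlt.le⟩ (right_mem_Icc.2 one_lt_sqrt_three.le) hlt
  · exact hmono self_mem_Ici hgt.le hgt
end

section
/- For t > 0, α > 0 and y ≥ 1 define E_t(y;α) = θ₃(t²α)·θ₃(yα)·θ₃(α/y) + θ₂(t²α)·θ₂(yα)·θ₂(α/y). Then for every t with 0 < t < √2 there exists α_t > 0 such that for every α > α_t, y = 1 is not a minimizer of y ↦ E_t(y;α) on [1,+∞); that is, there exists y > 1 with E_t(y;α) < E_t(1;α). In particular (taking t = 1) there exists α₁ such that for α > α₁ the BCC lattice is not a minimizer of θ among the body-centred-orthorhombic lattices L_{y,1}, y ≥ 1. -/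
/-!
For large `α` the lattice sum is governed by short vectors. The vectors of the odd layers of
`L_{y,t}` closest to the origin have squared length `(t² + y + y⁻¹) / 4`, which at `y = 1` is
`(t² + 2) / 4`. Subtracting the common contribution `θ₃(t²α)` of the vertical axis,

* the energy at `y = 1` keeps at least `e^{-πα(t² + 2)/4}`, coming from an odd layer;
* at `y > 1` the odd layers contribute `O(e^{-πα(t² + y + y⁻¹)/4})`, and the even layers contribute
  `O(e^{-πα/y})`, because `1/√y` is the shorter side of the rectangle.

Both terms of the second item are `o(e^{-πα(t² + 2)/4})` once `1 < y < 4 / (t² + 2)`, and such a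
`y` exists exactly when `t < √2`.
-/

open scoped BigOperators

/-- The theta function `E_t(y;α) = θ_{L_{y,t}}(α)` of the body-centred-orthorhombic
lattice `L_{y,t}`. -/
noncomputable def Et (t α y : ℝ) : ℝ :=
  theta3 (t ^ 2 * α) * theta3 (y * α) * theta3 (α / y)
    + theta2 (t ^ 2 * α) * theta2 (y * α) * theta2 (α / y)

open Real Filter Asymptotics

lemma exp_neg_mul_isLittleO_of_lt {a b : ℝ} (hab : a < b) :
    (fun x ↦ exp (-b * x)) =o[atTop] fun x ↦ exp (-a * x) := by
  rw [isLittleO_exp_comp_exp_comp]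
  simpa only [← sub_mul, neg_sub_neg, id] using tendsto_id.const_mul_atTop (sub_pos.2 hab)

lemma tsum_exp_mul_isBigO {ι : Type*} {a : ι → ℝ} {b x₀ : ℝ} (hab : ∀ i, a i ≤ b)
    (hs : Summable fun i ↦ exp (a i * x₀)) :
    (fun x ↦ ∑' i, exp (a i * x)) =O[atTop] fun x ↦ exp (b * x) := by
  refine .of_bound (exp (-b * x₀) * ∑' i, exp (a i * x₀)) ?_
  filter_upwards [eventually_ge_atTop x₀] with x hx
  have term_le (i : ι) : exp (a i * x) ≤ exp (-b * x₀) * exp (b * x) * exp (a i * x₀) := by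
    rw [← exp_add, ← exp_add, exp_le_exp]
    linarith [mul_le_mul_of_nonneg_right (hab i) (sub_nonneg.2 hx)]
  have hs' := hs.mul_left (exp (-b * x₀) * exp (b * x))
  rw [norm_of_nonneg (tsum_nonneg fun i ↦ (exp_pos _).le), norm_of_nonneg (exp_pos _).le]
  calc ∑' i, exp (a i * x)
      ≤ ∑' i, exp (-b * x₀) * exp (b * x) * exp (a i * x₀) :=
        (hs'.of_nonneg_of_le (fun i ↦ (exp_pos _).le) term_le).tsum_le_tsum term_le hs'
    _ = exp (-b * x₀) * (∑' i, exp (a i * x₀)) * exp (b * x) := by rw [tsum_mul_left]; ring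

section Theta

variable {x c : ℝ}

lemma hasSum_theta2 (hx : 0 < x) :
    HasSum (fun n : ℤ ↦ exp (-π * ((n : ℝ) + 1 / 2) ^ 2 * x)) (theta2 x) :=
  (HurwitzZeta.hasSum_int_evenKernel (1 / 2) hx).summable.hasSum

lemma hasSum_theta3 (hx : 0 < x) :
    HasSum (fun n : ℤ ↦ exp (-π * (n : ℝ) ^ 2 * x)) (theta3 x) := by
  have h := HurwitzZeta.hasSum_int_evenKernel 0 hx
  simp only [add_zero] at h
  exact h.summable.hasSum

lemma theta2_nonneg (x : ℝ) : 0 ≤ theta2 x :=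
  tsum_nonneg fun _ ↦ (exp_pos _).le

lemma exp_le_theta2 (hx : 0 < x) : exp (-(π / 4) * x) ≤ theta2 x := by
  have h := le_hasSum (hasSum_theta2 hx) 0 fun n _ ↦ (exp_pos _).le
  rwa [show -π * (((0 : ℤ) : ℝ) + 1 / 2) ^ 2 * x = -(π / 4) * x by push_cast; ring] at h

lemma one_le_theta3 (hx : 0 < x) : 1 ≤ theta3 x := by
  simpa using le_hasSum (hasSum_theta3 hx) 0 fun n _ ↦ (exp_pos _).le

lemma ofReal_theta3 (x : ℝ) : (theta3 x : ℂ) = jacobiTheta (x * Complex.I) := by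
  rw [theta3, jacobiTheta, Complex.ofReal_tsum]
  refine tsum_congr fun n ↦ ?_
  push_cast
  congr 1
  linear_combination (-π * n ^ 2 * x : ℂ) * Complex.I_sq

lemma theta3_sub_one_isBigO :
    (fun x ↦ theta3 x - 1) =O[atTop] fun x ↦ exp (-π * x) := by
  have tendsto_mul_I : Tendsto (fun x : ℝ ↦ (x : ℂ) * Complex.I) atTop (comap Complex.im atTop) :=
    tendsto_comap_iff.2 (tendsto_id.congr fun x ↦ by simp)
  refine Complex.isBigO_ofReal_left.1
    ((isBigO_at_im_infty_jacobiTheta_sub_one.comp_tendsto tendsto_mul_I).congr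
      (fun x ↦ ?_) fun x ↦ ?_)
  · simp [ofReal_theta3]
  · simp

lemma theta2_isBigO : theta2 =O[atTop] fun x ↦ exp (-(π / 4) * x) := by
  refine tsum_exp_mul_isBigO (fun n ↦ ?_) (hasSum_theta2 one_pos).summable
  have mul_succ_nonneg : (0 : ℤ) ≤ n * (n + 1) := by
    rcases le_or_gt 0 n with h | h <;> nlinarith
  have quarter_le : (1 / 4 : ℝ) ≤ ((n : ℝ) + 1 / 2) ^ 2 := by
    have : (0 : ℝ) ≤ n * (n + 1) := mod_cast mul_succ_nonneg
    linarith
  linarith [mul_le_mul_of_nonneg_left quarter_le pi_pos.le]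

lemma theta2_mul_isBigO (hc : 0 < c) :
    (fun x ↦ theta2 (c * x)) =O[atTop] fun x ↦ exp (-(π / 4 * c) * x) := by
  simpa only [Function.comp_def, id, neg_mul, mul_assoc] using
    theta2_isBigO.comp_tendsto (tendsto_id.const_mul_atTop hc)

lemma theta3_mul_sub_one_isBigO (hc : 0 < c) :
    (fun x ↦ theta3 (c * x) - 1) =O[atTop] fun x ↦ exp (-(π * c) * x) := by
  simpa only [Function.comp_def, id, neg_mul, mul_assoc] using
    theta3_sub_one_isBigO.comp_tendsto (tendsto_id.const_mul_atTop hc)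

lemma theta3_mul_isBigO_one (hc : 0 < c) :
    (fun x ↦ theta3 (c * x)) =O[atTop] fun _ ↦ (1 : ℝ) := by
  have exp_isBigO : (fun x ↦ exp (-(π * c) * x)) =O[atTop] fun _ ↦ (1 : ℝ) := by
    simpa using HurwitzKernelBounds.isBigO_exp_neg_mul_of_le (mul_pos pi_pos hc).le
  simpa using ((theta3_mul_sub_one_isBigO hc).trans exp_isBigO).add (isBigO_refl _ _)

lemma theta3_mul_theta3_sub_one_isBigO {a b : ℝ} (ha : 0 < a) (hab : a ≤ b) :
    (fun x ↦ theta3 (b * x) * theta3 (a * x) - 1) =O[atTop] fun x ↦ exp (-(π * a) * x) := by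
  have hb : (fun x ↦ (theta3 (b * x) - 1) * theta3 (a * x)) =O[atTop]
      fun x ↦ exp (-(π * b) * x) := by
    simpa only [mul_one] using
      (theta3_mul_sub_one_isBigO (ha.trans_le hab)).mul (theta3_mul_isBigO_one ha)
  have hba : π * a ≤ π * b := by gcongr
  exact ((hb.trans (HurwitzKernelBounds.isBigO_exp_neg_mul_of_le hba)).add
    (theta3_mul_sub_one_isBigO ha)).congr_left fun x ↦ by ring

end Theta

section Energy

variable {t α y : ℝ}

lemma theta3_add_exp_le_Et_one (ht : t ≠ 0) (hα : 0 < α) :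
    theta3 (t ^ 2 * α) + exp (-(π / 4 * (t ^ 2 + 2)) * α) ≤ Et t α 1 := by
  have htα : 0 < t ^ 2 * α := by positivity
  have one_le_sq : 1 ≤ theta3 α * theta3 α :=
    one_le_mul_of_one_le_of_one_le (one_le_theta3 hα) (one_le_theta3 hα)
  have theta3_part : theta3 (t ^ 2 * α) ≤ theta3 (t ^ 2 * α) * (theta3 α * theta3 α) :=
    le_mul_of_one_le_right (zero_le_one.trans (one_le_theta3 htα)) one_le_sq
  have theta2_part : exp (-(π / 4) * (t ^ 2 * α)) * (exp (-(π / 4) * α) * exp (-(π / 4) * α)) ≤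
      theta2 (t ^ 2 * α) * (theta2 α * theta2 α) := by
    have exp_le_α := exp_le_theta2 hα
    have exp_le_tα := exp_le_theta2 htα
    have := theta2_nonneg α
    have := theta2_nonneg (t ^ 2 * α)
    gcongr
  have exp_eq : exp (-(π / 4 * (t ^ 2 + 2)) * α) =
      exp (-(π / 4) * (t ^ 2 * α)) * (exp (-(π / 4) * α) * exp (-(π / 4) * α)) := by
    rw [← exp_add, ← exp_add]
    ring_nf
  rw [exp_eq, Et, one_mul, div_one, mul_assoc, mul_assoc (theta2 _)]
  exact add_le_add theta3_part theta2_part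

lemma theta3_part_isLittleO (ht : t ≠ 0) (hy : 1 < y) (hty : y * (t ^ 2 + 2) < 4) :
    (fun α ↦ theta3 (t ^ 2 * α) * (theta3 (y * α) * theta3 (α / y) - 1)) =o[atTop]
      fun α ↦ exp (-(π / 4 * (t ^ 2 + 2)) * α) := by
  have hy0 : 0 < y := one_pos.trans hy
  have rate_lt : π / 4 * (t ^ 2 + 2) < π * y⁻¹ := by
    rw [← div_eq_mul_inv, lt_div_iff₀ hy0]
    linarith [mul_lt_mul_of_pos_left hty pi_pos]
  have h := (theta3_mul_isBigO_one (sq_pos_of_ne_zero ht)).mul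
    (theta3_mul_theta3_sub_one_isBigO (inv_pos.2 hy0) ((inv_le_one_of_one_le₀ hy.le).trans hy.le))
  simp only [one_mul] at h
  simpa only [div_eq_inv_mul] using h.trans_isLittleO (exp_neg_mul_isLittleO_of_lt rate_lt)

lemma theta2_part_isLittleO (ht : t ≠ 0) (hy : 1 < y) :
    (fun α ↦ theta2 (t ^ 2 * α) * theta2 (y * α) * theta2 (α / y)) =o[atTop]
      fun α ↦ exp (-(π / 4 * (t ^ 2 + 2)) * α) := by
  have hy0 : 0 < y := one_pos.trans hy
  have two_lt : 2 < y + y⁻¹ := by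
    have sub_two_eq : y + y⁻¹ - 2 = (y - 1) ^ 2 / y := by field_simp; ring
    linarith [div_pos (pow_pos (sub_pos.2 hy) 2) hy0]
  have rate_lt : π / 4 * (t ^ 2 + 2) < π / 4 * (t ^ 2 + y + y⁻¹) := by
    rw [add_assoc]
    gcongr
  have h := ((theta2_mul_isBigO (sq_pos_of_ne_zero ht)).mul (theta2_mul_isBigO hy0)).mul
    (theta2_mul_isBigO (inv_pos.2 hy0))
  simp only [← exp_add, ← add_mul, ← neg_add, ← mul_add] at h
  simpa only [div_eq_inv_mul] using h.trans_isLittleO (exp_neg_mul_isLittleO_of_lt rate_lt)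

lemma Et_sub_theta3_isLittleO (ht : t ≠ 0) (hy : 1 < y) (hty : y * (t ^ 2 + 2) < 4) :
    (fun α ↦ Et t α y - theta3 (t ^ 2 * α)) =o[atTop]
      fun α ↦ exp (-(π / 4 * (t ^ 2 + 2)) * α) :=
  ((theta3_part_isLittleO ht hy hty).add (theta2_part_isLittleO ht hy)).congr_left fun α ↦ by
    rw [Et]; ring

lemma eventually_Et_lt_Et_one (ht : t ≠ 0) (hy : 1 < y) (hty : y * (t ^ 2 + 2) < 4) :
    ∀ᶠ α in atTop, Et t α y < Et t α 1 := by
  filter_upwards [(Et_sub_theta3_isLittleO ht hy hty).bound one_half_pos, eventually_gt_atTop 0]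
    with α hbound hα
  rw [norm_eq_abs, norm_of_nonneg (exp_pos _).le] at hbound
  linarith [le_of_abs_le hbound, theta3_add_exp_le_Et_one ht hα,
    exp_pos (-(π / 4 * (t ^ 2 + 2)) * α)]

end Energy

/-- for every `0 < t < √2` there is `α_t > 0` such that for all `α > α_t`,
`y = 1` is not a minimizer of `y ↦ E_t(y;α)` on `[1,∞)`: some `y > 1` has strictly smaller
energy.  In particular (`t = 1`) the BCC lattice is not a minimizer among the
body-centred-orthorhombic lattices `L_{y,1}` for large `α`. -/
theorem one_not_minimizer_for_large_alpha (t : ℝ) (ht : 0 < t) (ht2 : t < Real.sqrt 2) :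
    ∃ αt : ℝ, 0 < αt ∧ ∀ α : ℝ, αt < α →
      ∃ y : ℝ, 1 < y ∧ Et t α y < Et t α 1 := by
  have sq_lt : t ^ 2 < 2 := (lt_sqrt ht.le).1 ht2
  obtain ⟨y, hy, hyt⟩ : ∃ y : ℝ, 1 < y ∧ y < 4 / (t ^ 2 + 2) :=
    exists_between ((one_lt_div (by positivity)).2 (by linarith))
  have hty : y * (t ^ 2 + 2) < 4 := (lt_div_iff₀ (by positivity)).1 hyt
  obtain ⟨a, ha⟩ := eventually_atTop.1 (eventually_Et_lt_Et_one ht.ne' hy hty)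
  exact ⟨max a 1, by positivity, fun α hα ↦ ⟨y, hy, ha α ((le_max_left a 1).trans hα.le)⟩⟩
end
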